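/- arXiv:2301.00278 — 3 statements merged into one kernel-verified Lean document; each statement's English description precedes it below -/
import Mathlib

section
/- Let t ≥ 1 and let G be a connected graph whose isometric path antichain cover number is at least 8t + 64. Then G contains a (t+1)-fat turtle as an induced subgraph. -/
open SimpleGraph

variable {V : Type*}

/-- One step of the BFS DAG `G_r`: the edge `ab` is oriented from `a` to `b`
(toward the root `r`), i.e. `d(r,b) = d(r,a) - 1`. -/
def dagStep (G : SimpleGraph V) (r a b : V) : Prop :=
  G.Adj a b ∧ G.dist r a = G.dist r b + 1

/-- Reachability by a directed path in the BFS DAG `G_r`. -/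
def dagReach (G : SimpleGraph V) (r a b : V) : Prop :=
  Relation.ReflTransGen (dagStep G r) a b

/-- A finite set of vertices is an antichain with respect to the root `r`:
its vertices are pairwise unreachable in the BFS DAG `G_r`. -/
def IsAntichainSet (G : SimpleGraph V) (r : V) (A : Finset V) : Prop :=
  ∀ a ∈ A, ∀ b ∈ A, a ≠ b → ¬ dagReach G r a b ∧ ¬ dagReach G r b a

/-- A walk is an isometric path: a shortest path between its endpoints. -/
def IsIsometricPath (G : SimpleGraph V) {u v : V} (p : G.Walk u v) : Prop :=
  p.IsPath ∧ p.length = G.dist u v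

/-- The vertices of `p` can be covered by at most `k` many `r`-rooted isometric paths. -/
def CoveredBy (G : SimpleGraph V) (r : V) {x y : V} (p : G.Walk x y) (k : ℕ) : Prop :=
  ∃ s : Finset (Σ v : V, G.Walk r v), s.card ≤ k ∧
    (∀ q ∈ s, IsIsometricPath G q.2) ∧
    ∀ a ∈ p.support, ∃ q ∈ s, a ∈ q.2.support
/-- The graph consisting of the edges of the closed walk `C` (the "cycle graph"
of `C`); distances in this graph are distances along the cycle. -/
def cycleGraph (G : SimpleGraph V) {c : V} (C : G.Walk c c) : SimpleGraph V :=
  SimpleGraph.fromEdgeSet {e | e ∈ C.edges}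

/-- `G` contains a `t`-fat turtle as an induced subgraph: a cycle `C` and an
induced `(u,v)`-path `P` of length at least `t` such that (a) `P` and `C` are
vertex-disjoint, (b) no internal vertex of `P` has a neighbour in `C` while `u`
and `v` both have one, (c) neighbours of `u` on `C` and neighbours of `v` on `C`
are at distance at least `t` in `C`, and (d) there are `c ≠ c'` on `C` such that
the neighbours of `u` and of `v` on `C` lie in two distinct components of
`C - {c, c'}`. -/
def HasFatTurtle (G : SimpleGraph V) (t : ℕ) : Prop :=
  ∃ (c0 u v : V) (C : G.Walk c0 c0) (P : G.Walk u v),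
    C.IsCycle ∧ P.IsPath ∧ t ≤ P.length ∧
    (∀ x ∈ P.support, ∀ y ∈ P.support, G.Adj x y → s(x, y) ∈ P.edges) ∧
    (∀ x ∈ P.support, x ∉ C.support) ∧
    (∀ x ∈ P.support, x ≠ u → x ≠ v → ∀ y ∈ C.support, ¬ G.Adj x y) ∧
    (∃ y ∈ C.support, G.Adj u y) ∧ (∃ y ∈ C.support, G.Adj v y) ∧
    (∀ y ∈ C.support, G.Adj u y → ∀ y' ∈ C.support, G.Adj v y' →
      t ≤ (cycleGraph G C).dist y y') ∧
    (∃ c c' : V, c ≠ c' ∧ c ∈ C.support ∧ c' ∈ C.support ∧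
      ∃ Ku Kv : ((cycleGraph G C).induce
          {x : V | x ∈ C.support ∧ x ≠ c ∧ x ≠ c'}).ConnectedComponent,
        Ku ≠ Kv ∧
        (∀ y, G.Adj u y → y ∈ C.support →
          ∃ hy : y ∈ {x : V | x ∈ C.support ∧ x ≠ c ∧ x ≠ c'},
            ((cycleGraph G C).induce
              {x : V | x ∈ C.support ∧ x ≠ c ∧ x ≠ c'}).connectedComponentMk ⟨y, hy⟩ = Ku) ∧
        (∀ y, G.Adj v y → y ∈ C.support →
          ∃ hy : y ∈ {x : V | x ∈ C.support ∧ x ≠ c ∧ x ≠ c'},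
            ((cycleGraph G C).induce
              {x : V | x ∈ C.support ∧ x ≠ c ∧ x ≠ c'}).connectedComponentMk ⟨y, hy⟩ = Kv))

/-!
Fix a root `r`, call `G.dist r v` the height of `v`, and let `f 0, …, f n` be a shortest path. The
distance between two antichain vertices of the path exceeds their height difference, and this
excess, the slack, adds up along the path. So `4 * (2 * t + 7) + 1` antichain vertices provide
positions `x < a < y < w < z` with slack at least `2 * t + 7` between neighbouring ones. With so
much slack, the descents (directed paths of the BFS DAG) from `f x`, `f y` and `f z` come within
distance `t + 2` of the path only before `f a`, between `f a` and `f w`, and after `f w`,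
respectively.

Move `y` and `z` down to lowest vertices of the path. The segment from `f y` to `f z` and descents
from its ends to their highest common descendant, the apex, form a cycle. Follow the path from `f x`
towards `f y`, and a descent from `f x` to `r` and back up to the apex, until the cycle is first
seen, at `f l` and at `v`. These are far apart, and a shortest connection between them through the
vertices just visited is the path of the turtle. The neighbours of `f l` on the cycle all lie on the
descent from `f y`, those of `v` never on the segment. Moreover `v` sees the descent from `f y` only
strictly below `c`, the vertex following the lowest neighbour of `f l`: otherwise passing through
`v` would be too cheap a way from `f x` to `f y`, given the slack between `f x` and `f l`. Hence
removing `c` and `f z` from the cycle separates the two neighbourhoods.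
-/

section Walks

variable {G : SimpleGraph V}

lemma start_notMem_tail_support {u v : V} {p : G.Walk u v} (hp : p.IsPath) :
    u ∉ p.support.tail := by
  have hnodup := hp.support_nodup
  rw [← Walk.cons_tail_support] at hnodup
  exact (List.nodup_cons.mp hnodup).1

lemma isPath_append {u v w : V} {p : G.Walk u v} {q : G.Walk v w} (hp : p.IsPath) (hq : q.IsPath)
    (h : ∀ x ∈ p.support, x ∈ q.support → x = v) : (p.append q).IsPath := by
  rw [Walk.isPath_def, Walk.support_append, List.nodup_append']
  refine ⟨hp.support_nodup, hq.support_nodup.tail, fun x hxp hxq => ?_⟩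
  obtain rfl := h x hxp (List.mem_of_mem_tail hxq)
  exact start_notMem_tail_support hq hxq

lemma dist_getVert_getVert {u v : V} {p : G.Walk u v} (hp : p.length = G.dist u v) {i j : ℕ}
    (hij : i ≤ j) (hj : j ≤ p.length) : G.dist (p.getVert i) (p.getVert j) = j - i := by
  have hsub := length_eq_dist_of_subwalk (p₂ := (p.drop i).take (j - i)) hp
    ((Walk.isSubwalk_take _ _).trans (Walk.isSubwalk_drop _ _))
  rw [Walk.take_length, Walk.drop_length, Walk.drop_getVert, Nat.add_sub_cancel' hij] at hsub
  omega

lemma isChordless_of_length_eq_dist {u v : V} {p : G.Walk u v} (hp : p.length = G.dist u v) :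
    p.IsChordless := by
  rw [Walk.isChordless_iff_forall_mem_edges]
  intro x y hx hy hxy
  obtain ⟨i, rfl, hi⟩ := Walk.mem_support_iff_exists_getVert.mp hx
  obtain ⟨j, rfl, hj⟩ := Walk.mem_support_iff_exists_getVert.mp hy
  wlog hij : i ≤ j generalizing i j
  · rw [Sym2.eq_swap]
    exact this j hj hy i hi hx hxy.symm (le_of_not_ge hij)
  have hone : j - i = 1 := by
    rw [← dist_getVert_getVert hp hij hj, dist_eq_one_iff_adj]
    exact hxy
  obtain rfl : j = i + 1 := by omega
  exact (p.mk_mem_edges_iff_exists).mpr ⟨i, by omega, rfl⟩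

lemma isChordless_map {V' : Type*} {G' : SimpleGraph V'} (φ : G' ↪g G) {u v : V'}
    {p : G'.Walk u v} (hp : p.IsChordless) : (p.map φ.toHom).IsChordless := by
  rw [Walk.isChordless_iff_forall_mem_edges]
  intro x y hx hy hxy
  rw [Walk.support_map, List.mem_map] at hx hy
  obtain ⟨x', hx', rfl⟩ := hx
  obtain ⟨y', hy', rfl⟩ := hy
  rw [Walk.edges_map, List.mem_map]
  exact ⟨s(x', y'), hp.mem_edges hx' hy' (φ.map_rel_iff.mp hxy), rfl⟩

lemma exists_isPath_isChordless {u v : V} (p : G.Walk u v) :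
    ∃ q : G.Walk u v, q.IsPath ∧ q.IsChordless ∧ q.support ⊆ p.support := by
  let φ : G.induce {x | x ∈ p.support} ↪g G := Embedding.induce _
  have hreach := (p.induce {x | x ∈ p.support} fun _ hx => hx).reachable
  obtain ⟨q, hq, hlen⟩ := hreach.exists_path_of_dist
  refine ⟨q.map φ.toHom, hq.map φ.injective,
    isChordless_map φ (isChordless_of_length_eq_dist hlen), fun x hx => ?_⟩
  obtain ⟨x', -, rfl⟩ := List.mem_map.mp (q.support_map φ.toHom ▸ hx)
  exact x'.2

/-- The vertices of a walk other than its two ends. -/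
def walkInterior {u v : V} (p : G.Walk u v) : Set V :=
  {x | x ∈ p.support ∧ x ≠ u ∧ x ≠ v}

lemma exists_walk_of_mem_walkInterior {u v x y : V} {p : G.Walk u v} (hp : p.IsPath)
    (hx : x ∈ walkInterior p) (hy : y ∈ walkInterior p) :
    ∃ q : G.Walk x y, (∀ z ∈ q.support, z ∈ walkInterior p) ∧ q.edges ⊆ p.edges := by
  classical
  have hnil : ¬ p.Nil := fun hnil => by
    have := (Walk.nil_iff_support_eq.mp hnil) ▸ hx.1
    exact hx.2.1 (List.mem_singleton.mp this)
  have htail : ¬ p.tail.Nil := fun htail => by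
    have hx' : x ∈ p.tail.support := by
      simpa [hx.2.1, ← Walk.cons_support_tail hnil] using hx.1
    rw [Walk.nil_iff_support_eq.mp htail, List.mem_singleton] at hx'
    exact hx.2.2 (hx'.trans htail.eq)
  have hsupport : p.support = u :: (p.tail.dropLast.support ++ [v]) := by
    rw [Walk.support_dropLast_concat htail, Walk.cons_support_tail hnil]
  have hnodup := hsupport ▸ hp.support_nodup
  have mem_iff (z : V) : z ∈ p.tail.dropLast.support ↔ z ∈ walkInterior p := by
    simp only [walkInterior, Set.mem_ofPred_eq, hsupport]
    grind
  have hedges : p.tail.dropLast.edges ⊆ p.edges := by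
    rw [Walk.edges_dropLast, Walk.edges_tail]
    exact fun e he => List.mem_of_mem_tail (List.mem_of_mem_dropLast he)
  refine ⟨(p.tail.dropLast.takeUntil x ((mem_iff x).2 hx)).reverse.append
    (p.tail.dropLast.takeUntil y ((mem_iff y).2 hy)), fun z hz => (mem_iff z).1 ?_, ?_⟩
  · rw [Walk.mem_support_append_iff, Walk.support_reverse, List.mem_reverse] at hz
    exact hz.elim (Walk.support_takeUntil_subset_support _ _ ·)
      (Walk.support_takeUntil_subset_support _ _ ·)
  · intro e he
    rw [Walk.edges_append, List.mem_append, Walk.edges_reverse, List.mem_reverse] at he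
    exact hedges (he.elim (Walk.edges_takeUntil_subset_edges _ _ ·)
      (Walk.edges_takeUntil_subset_edges _ _ ·))

end Walks

section ContactWalk

variable {G : SimpleGraph V} {K : Set V}

/-- A walk avoiding `K` whose two ends, and no other vertices, have neighbours in `K`. The path of
a turtle stands in this relation to its cycle. -/
structure IsContactWalk (G : SimpleGraph V) (K : Set V) {u v : V} (p : G.Walk u v) : Prop where
  notMem : ∀ x ∈ p.support, x ∉ K
  exists_adj_start : ∃ k ∈ K, G.Adj u k
  exists_adj_end : ∃ k ∈ K, G.Adj v k
  eq_or_eq_of_adj : ∀ x ∈ p.support, ∀ k ∈ K, G.Adj x k → x = u ∨ x = v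

lemma exists_first_contact {u v : V} (p : G.Walk u v) (hu : u ∉ K) (hv : v ∈ K) :
    ∃ w ∈ p.support, (∃ k ∈ K, G.Adj w k) ∧ ∃ q : G.Walk u w,
      (∀ x ∈ q.support, x ∉ K) ∧ ∀ x ∈ q.support, ∀ k ∈ K, G.Adj x k → x = w := by
  induction p with
  | nil => exact absurd hv hu
  | @cons a b c hab p ih =>
    by_cases ha : ∃ k ∈ K, G.Adj a k
    · exact ⟨a, Walk.start_mem_support _, ha, Walk.nil, by simpa using hu, by simp⟩
    · have hb : b ∉ K := fun hb => ha ⟨b, hb, hab⟩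
      obtain ⟨w, hwp, hwK, q, hqK, hqw⟩ := ih hb hv
      refine ⟨w, List.mem_cons_of_mem _ hwp, hwK, Walk.cons hab q, ?_, ?_⟩
      · simpa only [Walk.support_cons, List.forall_mem_cons] using ⟨hu, hqK⟩
      · rw [Walk.support_cons, List.forall_mem_cons]
        exact ⟨fun k hk hak => absurd ⟨k, hk, hak⟩ ha, hqw⟩

lemma exists_isContactWalk {x a b : V} (p : G.Walk x a) (q : G.Walk x b) (hx : x ∉ K)
    (ha : a ∈ K) (hb : b ∈ K) :
    ∃ u ∈ p.support, ∃ v ∈ q.support, ∃ W : G.Walk u v, IsContactWalk G K W := by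
  obtain ⟨u, hup, huK, p', hpK, hpu⟩ := exists_first_contact p hx ha
  obtain ⟨v, hvq, hvK, q', hqK, hqv⟩ := exists_first_contact q hx hb
  have mem_or_mem {y : V} (hy : y ∈ (p'.reverse.append q').support) :
      y ∈ p'.support ∨ y ∈ q'.support := by
    rwa [Walk.mem_support_append_iff, Walk.support_reverse, List.mem_reverse] at hy
  refine ⟨u, hup, v, hvq, p'.reverse.append q', ?_, huK, hvK, ?_⟩
  · exact fun y hy => (mem_or_mem hy).elim (hpK y) (hqK y)
  · exact fun y hy k hk hyk => (mem_or_mem hy).imp (hpu y · k hk hyk) (hqv y · k hk hyk)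

lemma IsContactWalk.exists_isPath_isChordless {u v : V} {p : G.Walk u v}
    (hp : IsContactWalk G K p) :
    ∃ q : G.Walk u v, q.IsPath ∧ q.IsChordless ∧ IsContactWalk G K q := by
  obtain ⟨q, hpath, hchord, hqp⟩ := _root_.exists_isPath_isChordless p
  exact ⟨q, hpath, hchord, fun x hx => hp.notMem x (hqp hx), hp.exists_adj_start,
    hp.exists_adj_end, fun x hx => hp.eq_or_eq_of_adj x (hqp hx)⟩

end ContactWalk

section CycleGraph

variable {G : SimpleGraph V} {a b c x y : V}

lemma edgeSet_cycleGraph (C : G.Walk c c) : (cycleGraph G C).edgeSet = {e | e ∈ C.edges} := by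
  rw [_root_.cycleGraph, edgeSet_fromEdgeSet, sdiff_eq_left]
  exact Set.disjoint_left.2 fun e he => G.not_isDiag_of_mem_edgeSet (C.edges_subset_edgeSet he)

lemma cycleGraph_le (C : G.Walk c c) : cycleGraph G C ≤ G := by
  rw [← edgeSet_subset_edgeSet, edgeSet_cycleGraph]
  exact fun e he => C.edges_subset_edgeSet he

lemma reachable_cycleGraph {C : G.Walk c c} (hx : x ∈ C.support) (hy : y ∈ C.support) :
    (cycleGraph G C).Reachable x y := by
  have hC : ∀ e ∈ C.edges, e ∈ (cycleGraph G C).edgeSet := by simp [edgeSet_cycleGraph]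
  have from_base {z : V} (hz : z ∈ C.support) : (cycleGraph G C).Reachable c z := by
    classical
    exact ⟨(C.takeUntil z hz).transfer _ fun e he => hC e (C.edges_takeUntil_subset_edges hz he)⟩
  exact (from_base hx).symm.trans (from_base hy)

lemma reachable_cycleGraph_induce {C : G.Walk c c} {p : G.Walk a b} (hp : p.IsPath)
    (hpC : p.edges ⊆ C.edges) {T : Set V} (hT : walkInterior p ⊆ T) (hx : x ∈ walkInterior p)
    (hy : y ∈ walkInterior p) :
    ((cycleGraph G C).induce T).Reachable ⟨x, hT hx⟩ ⟨y, hT hy⟩ := by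
  obtain ⟨q, hqp, hqe⟩ := exists_walk_of_mem_walkInterior hp hx hy
  have hqC : ∀ e ∈ q.edges, e ∈ (cycleGraph G C).edgeSet := fun e he => by
    rw [edgeSet_cycleGraph]
    exact hpC (hqe he)
  refine ⟨(q.transfer _ hqC).induce T fun z hz => hT (hqp z ?_)⟩
  rwa [Walk.support_transfer] at hz

end CycleGraph

section ArcPair

variable {G : SimpleGraph V} {a b u v x y : V} {R S : G.Walk a b}

/-- Two paths that meet only in their common, distinct ends: the arcs of the cycle
`R.append S.reverse`, provided one of them has an inner vertex. -/
structure IsArcPair (R S : G.Walk a b) : Prop where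
  ne : a ≠ b
  isPath_left : R.IsPath
  isPath_right : S.IsPath
  eq_or_eq : ∀ x ∈ R.support, x ∈ S.support → x = a ∨ x = b

lemma mem_support_append_reverse :
    x ∈ (R.append S.reverse).support ↔ x ∈ R.support ∨ x ∈ S.support := by
  rw [Walk.mem_support_append_iff, Walk.support_reverse, List.mem_reverse]

lemma mem_edges_append_reverse {e : Sym2 V} :
    e ∈ (R.append S.reverse).edges ↔ e ∈ R.edges ∨ e ∈ S.edges := by
  rw [Walk.edges_append, List.mem_append, Walk.edges_reverse, List.mem_reverse]

lemma one_lt_length_of_mem_walkInterior (hx : x ∈ walkInterior R) : 1 < R.length := by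
  obtain ⟨hxR, hxa, hxb⟩ := hx
  obtain ⟨i, rfl, hi⟩ := Walk.mem_support_iff_exists_getVert.mp hxR
  have h0 : i ≠ 0 := by rintro rfl; exact hxa R.getVert_zero
  have h1 : i ≠ R.length := by rintro rfl; exact hxb R.getVert_length
  omega

lemma IsArcPair.isCycle (h : IsArcPair R S) (hx : x ∈ walkInterior R) :
    (R.append S.reverse).IsCycle := by
  refine h.isPath_left.isCycle_append h.isPath_right.reverse (fun z hzR hzS => ?_)
    (Or.inl (one_lt_length_of_mem_walkInterior hx))
  have hzS' : z ∈ S.support := by simpa using List.mem_of_mem_tail hzS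
  rcases h.eq_or_eq z (List.mem_of_mem_tail hzR) hzS' with rfl | rfl
  · exact start_notMem_tail_support h.isPath_left hzR
  · exact start_notMem_tail_support h.isPath_right.reverse hzS

lemma IsArcPair.not_reachable (h : IsArcPair R S) {T : Set V} (ha : a ∉ T) (hb : b ∉ T)
    {x y : T} (hx : x.1 ∈ R.support) (hy : y.1 ∈ S.support) :
    ¬ ((cycleGraph G (R.append S.reverse)).induce T).Reachable x y := by
  have hST (z : T) (hz : z.1 ∈ S.support) : z.1 ∉ R.support := fun hzR => by
    rcases h.eq_or_eq z hzR hz with hza | hzb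
    · exact ha (hza ▸ z.2)
    · exact hb (hzb ▸ z.2)
  rintro ⟨p⟩
  obtain ⟨d, -, hdR, hdR'⟩ := p.exists_boundary_dart {z | z.1 ∈ R.support} hx (hST y hy)
  have hd : s(d.fst.1, d.snd.1) ∈ (cycleGraph G (R.append S.reverse)).edgeSet := d.adj
  rw [edgeSet_cycleGraph, Set.mem_ofPred_eq, mem_edges_append_reverse] at hd
  rcases hd with hd | hd
  · exact hdR' (R.snd_mem_support_of_mem_edges hd)
  · exact hST d.fst (S.fst_mem_support_of_mem_edges hd) hdR

lemma IsArcPair.exists_components (h : IsArcPair R S) {X Y : Set V} (hX : X ⊆ walkInterior R)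
    (hY : Y ⊆ walkInterior S) (hXne : X.Nonempty) (hYne : Y.Nonempty) :
    let T : Set V := {z | z ∈ (R.append S.reverse).support ∧ z ≠ a ∧ z ≠ b}
    ∃ KX KY : ((cycleGraph G (R.append S.reverse)).induce T).ConnectedComponent, KX ≠ KY ∧
      (∀ z ∈ X, ∃ hz : z ∈ T, connectedComponentMk _ ⟨z, hz⟩ = KX) ∧
      ∀ z ∈ Y, ∃ hz : z ∈ T, connectedComponentMk _ ⟨z, hz⟩ = KY := by
  intro T
  have hRT : walkInterior R ⊆ T := fun z hz => ⟨mem_support_append_reverse.2 (.inl hz.1), hz.2⟩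
  have hST : walkInterior S ⊆ T := fun z hz => ⟨mem_support_append_reverse.2 (.inr hz.1), hz.2⟩
  obtain ⟨x, hx⟩ := hXne
  obtain ⟨y, hy⟩ := hYne
  refine ⟨connectedComponentMk _ ⟨x, hRT (hX hx)⟩, connectedComponentMk _ ⟨y, hST (hY hy)⟩,
    fun heq => ?_, fun z hz => ⟨hRT (hX hz), ?_⟩, fun z hz => ⟨hST (hY hz), ?_⟩⟩
  · exact h.not_reachable (fun ha => ha.2.1 rfl) (fun hb => hb.2.2 rfl) (hX hx).1 (hY hy).1
      (ConnectedComponent.exact heq)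
  · exact ConnectedComponent.sound (reachable_cycleGraph_induce h.isPath_left
      (fun e he => mem_edges_append_reverse.2 (.inl he)) hRT (hX hz) (hX hx))
  · exact ConnectedComponent.sound (reachable_cycleGraph_induce h.isPath_right
      (fun e he => mem_edges_append_reverse.2 (.inr he)) hST (hY hz) (hY hy))

lemma IsArcPair.hasFatTurtle (hG : G.Connected) (h : IsArcPair R S) {p : G.Walk u v}
    (hp : IsContactWalk G {x | x ∈ (R.append S.reverse).support} p) {t : ℕ}
    (ht : t + 2 ≤ G.dist u v)
    (hu : ∀ k ∈ (R.append S.reverse).support, G.Adj u k → k ∈ walkInterior R)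
    (hv : ∀ k ∈ (R.append S.reverse).support, G.Adj v k → k ∈ walkInterior S) :
    HasFatTurtle G t := by
  obtain ⟨P, hpath, hchord, hP⟩ := hp.exists_isPath_isChordless
  obtain ⟨k, hk, huk⟩ := hp.exists_adj_start
  obtain ⟨k', hk', hvk'⟩ := hp.exists_adj_end
  obtain ⟨Ku, Kv, hne, hKu, hKv⟩ := h.exists_components
    (X := {k | k ∈ (R.append S.reverse).support ∧ G.Adj u k})
    (Y := {k | k ∈ (R.append S.reverse).support ∧ G.Adj v k})
    (fun k hk => hu k hk.1 hk.2) (fun k hk => hv k hk.1 hk.2) ⟨k, hk, huk⟩ ⟨k', hk', hvk'⟩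
  refine ⟨a, u, v, R.append S.reverse, P, h.isCycle (hu k hk huk), hpath, ?_,
    fun x hx y hy hxy => hchord.mem_edges hx hy hxy, hP.notMem, ?_, ⟨k, hk, huk⟩,
    ⟨k', hk', hvk'⟩, ?_, a, b, h.ne, Walk.start_mem_support _, ?_, Ku, Kv, hne,
    fun y hy hyC => hKu y ⟨hyC, hy⟩, fun y hy hyC => hKv y ⟨hyC, hy⟩⟩
  · have := dist_le P
    omega
  · exact fun x hx hxu hxv y hy hxy => (hP.eq_or_eq_of_adj x hx y hy hxy).elim hxu hxv
  · intro y hy huy y' hy' hvy'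
    have hcycle := (reachable_cycleGraph hy hy').dist_anti (cycleGraph_le _)
    have huy' := hG.dist_triangle (u := u) (v := y) (w := v)
    have hyv := hG.dist_triangle (u := y) (v := y') (w := v)
    rw [dist_eq_one_iff_adj.2 huy] at huy'
    rw [dist_eq_one_iff_adj.2 hvy'.symm] at hyv
    omega
  · exact mem_support_append_reverse.2 (.inl R.end_mem_support)

end ArcPair

section DagReach

variable {G : SimpleGraph V} {r : V}

lemma dagReach_iff (hG : G.Connected) {a b : V} :
    dagReach G r a b ↔ G.dist r a = G.dist r b + G.dist a b := by
  constructor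
  · intro h
    induction h with
    | refl => rw [dist_self, add_zero]
    | @tail b c _ hbc ih =>
      obtain ⟨hadj, hstep⟩ := hbc
      have hbc := hG.dist_triangle (u := a) (v := b) (w := c)
      have hac := hG.dist_triangle (u := r) (v := c) (w := a)
      rw [dist_eq_one_iff_adj.2 hadj] at hbc
      rw [dist_comm (u := c)] at hac
      omega
  · obtain ⟨p, hp⟩ := hG.exists_walk_length_eq_dist a b
    rw [← hp]
    clear hp
    intro hlen
    induction p with
    | nil => exact Relation.ReflTransGen.refl
    | @cons a c b hac p ih =>
      rw [Walk.length_cons] at hlen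
      have hstep := hG.dist_triangle (u := r) (v := c) (w := a)
      have hcb := hG.dist_triangle (u := r) (v := b) (w := c)
      have hp := dist_le p
      rw [dist_eq_one_iff_adj.2 hac.symm] at hstep
      rw [dist_comm] at hp
      exact Relation.ReflTransGen.head ⟨hac, by omega⟩ (ih (by omega))

lemma dagReach_root (hG : G.Connected) (v : V) : dagReach G r v r := by
  rw [dagReach_iff hG, dist_self, zero_add, dist_comm]

lemma dagReach.dist_le (hG : G.Connected) {a b : V} (h : dagReach G r a b) :
    G.dist r b ≤ G.dist r a := by
  have := (dagReach_iff hG).1 h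
  omega

lemma dagReach.eq_of_dist_le (hG : G.Connected) {a b : V} (h : dagReach G r a b)
    (hle : G.dist r a ≤ G.dist r b) : a = b := by
  have := (dagReach_iff hG).1 h
  exact hG.dist_eq_zero_iff.1 (by omega)

end DagReach

section Descending

variable {G : SimpleGraph V} {r a b c x : V} {p : G.Walk a b}

/-- A directed path of the BFS DAG rooted at `r`, seen as a walk of the graph. -/
def IsDescending (G : SimpleGraph V) (r : V) {a b : V} (p : G.Walk a b) : Prop :=
  ∀ d ∈ p.darts, dagStep G r d.fst d.snd

lemma dagReach.exists_isDescending (h : dagReach G r a b) :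
    ∃ p : G.Walk a b, IsDescending G r p := by
  induction h using Relation.ReflTransGen.head_induction_on with
  | refl => exact ⟨Walk.nil, fun d hd => absurd hd List.not_mem_nil⟩
  | @head a c hac _ ih =>
    obtain ⟨p, hp⟩ := ih
    exact ⟨Walk.cons hac.1 p, List.forall_mem_cons.2 ⟨hac, hp⟩⟩

lemma IsDescending.dagReach_start_end (hp : IsDescending G r p) : dagReach G r a b := by
  induction p with
  | nil => exact Relation.ReflTransGen.refl
  | cons hac p ih =>
    obtain ⟨hstep, hp⟩ := List.forall_mem_cons.1 hp
    exact Relation.ReflTransGen.head hstep (ih hp)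

lemma IsDescending.takeUntil [DecidableEq V] (hp : IsDescending G r p) (hx : x ∈ p.support) :
    IsDescending G r (p.takeUntil x hx) :=
  fun d hd => hp d (p.darts_takeUntil_subset_darts hx hd)

lemma IsDescending.dropUntil [DecidableEq V] (hp : IsDescending G r p) (hx : x ∈ p.support) :
    IsDescending G r (p.dropUntil x hx) :=
  fun d hd => hp d (p.darts_dropUntil_subset_darts hx hd)

lemma IsDescending.dagReach_of_mem (hp : IsDescending G r p) (hx : x ∈ p.support) :
    dagReach G r a x := by
  classical
  exact (hp.takeUntil hx).dagReach_start_end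

lemma IsDescending.dagReach_end_of_mem (hp : IsDescending G r p) (hx : x ∈ p.support) :
    dagReach G r x b := by
  classical
  exact (hp.dropUntil hx).dagReach_start_end

lemma IsDescending.isPath (hG : G.Connected) (hp : IsDescending G r p) : p.IsPath := by
  have hlen : G.dist r a = G.dist r b + p.length := by
    induction p with
    | nil => rfl
    | cons hac p ih =>
      obtain ⟨hstep, hp⟩ := List.forall_mem_cons.1 hp
      rw [hstep.2, ih hp, Walk.length_cons, add_assoc]
  have hdist := (dagReach_iff hG).1 hp.dagReach_start_end
  exact p.isPath_of_length_eq_dist (by omega)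

lemma IsDescending.mem_takeUntil_iff [DecidableEq V] (hG : G.Connected) (hp : IsDescending G r p)
    (hc : c ∈ p.support) :
    x ∈ (p.takeUntil c hc).support ↔ x ∈ p.support ∧ G.dist r c ≤ G.dist r x := by
  refine ⟨fun hx => ⟨p.support_takeUntil_subset_support hc hx,
    ((hp.takeUntil hc).dagReach_end_of_mem hx).dist_le hG⟩, fun ⟨hx, hcx⟩ => ?_⟩
  rw [← p.take_spec hc, Walk.mem_support_append_iff] at hx
  rcases hx with hx | hx
  · exact hx
  · rw [← ((hp.dropUntil hc).dagReach_of_mem hx).eq_of_dist_le hG hcx]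
    exact Walk.end_mem_support _

lemma IsDescending.eq_of_dist_eq (hG : G.Connected) (hp : IsDescending G r p) (hx : x ∈ p.support)
    (hc : c ∈ p.support) (h : G.dist r x = G.dist r c) : x = c := by
  classical
  exact ((hp.takeUntil hc).dagReach_end_of_mem
    ((hp.mem_takeUntil_iff hG hc).2 ⟨hx, h.ge⟩)).eq_of_dist_le hG h.le

lemma IsDescending.mem_dropUntil_iff [DecidableEq V] (hG : G.Connected) (hp : IsDescending G r p)
    (hc : c ∈ p.support) :
    x ∈ (p.dropUntil c hc).support ↔ x ∈ p.support ∧ G.dist r x ≤ G.dist r c := by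
  refine ⟨fun hx => ⟨p.support_dropUntil_subset_support hc hx,
    ((hp.dropUntil hc).dagReach_of_mem hx).dist_le hG⟩, fun ⟨hx, hxc⟩ => ?_⟩
  rw [← p.take_spec hc, Walk.mem_support_append_iff] at hx
  rcases hx with hx | hx
  · rw [((hp.takeUntil hc).dagReach_end_of_mem hx).eq_of_dist_le hG hxc]
    exact Walk.start_mem_support _
  · exact hx

lemma IsDescending.exists_dagStep (hp : IsDescending G r p) (hx : x ∈ p.support) (hxb : x ≠ b) :
    ∃ y ∈ p.support, dagStep G r x y := by
  induction p with
  | nil => exact absurd (List.mem_singleton.1 hx) hxb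
  | cons hac p ih =>
    obtain ⟨hstep, hp⟩ := List.forall_mem_cons.1 hp
    rcases List.mem_cons.1 hx with rfl | hx
    · exact ⟨_, List.mem_cons_of_mem _ p.start_mem_support, hstep⟩
    · obtain ⟨y, hy, hxy⟩ := ih hp hx hxb
      exact ⟨y, List.mem_cons_of_mem _ hy, hxy⟩

end Descending

section Slack

variable {G : SimpleGraph V} {r u v w : V} {M N D : ℕ}

/-- The distance between `u` and `v` exceeds the difference of their distances to the root by at
least `M`. Since slack adds up along shortest paths, this makes the antichain condition
quantitative. -/
def HasSlack (G : SimpleGraph V) (r : V) (M : ℕ) (u v : V) : Prop :=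
  M + G.dist r u ≤ G.dist r v + G.dist u v ∧ M + G.dist r v ≤ G.dist r u + G.dist u v

/-- The vertex `v` is at distance at most `D` from some vertex reachable from `u` in the BFS DAG. -/
def NearShadow (G : SimpleGraph V) (r : V) (D : ℕ) (u v : V) : Prop :=
  ∃ q, dagReach G r u q ∧ G.dist q v ≤ D

lemma HasSlack.symm (h : HasSlack G r M u v) : HasSlack G r M v u := by
  obtain ⟨hu, hv⟩ := h
  rw [HasSlack, dist_comm (u := v)]
  exact ⟨hv, hu⟩

lemma hasSlack_zero (hG : G.Connected) (u v : V) : HasSlack G r 0 u v := by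
  have hu := hG.dist_triangle (u := r) (v := v) (w := u)
  have hv := hG.dist_triangle (u := r) (v := u) (w := v)
  rw [dist_comm (u := v)] at hu
  exact ⟨by omega, by omega⟩

lemma hasSlack_one (hG : G.Connected) (huv : ¬ dagReach G r u v) (hvu : ¬ dagReach G r v u) :
    HasSlack G r 1 u v := by
  obtain ⟨hu, hv⟩ := hasSlack_zero (r := r) hG u v
  rw [dagReach_iff hG] at huv hvu
  rw [dist_comm (u := v)] at hvu
  exact ⟨by omega, by omega⟩

lemma HasSlack.trans (huv : HasSlack G r M u v) (hvw : HasSlack G r N v w)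
    (h : G.dist u w = G.dist u v + G.dist v w) : HasSlack G r (M + N) u w := by
  obtain ⟨hu, hv⟩ := huv
  obtain ⟨hv', hw⟩ := hvw
  exact ⟨by omega, by omega⟩

lemma HasSlack.not_nearShadow (hG : G.Connected) (h : HasSlack G r M u v) (hD : 2 * D < M) :
    ¬ NearShadow G r D u v := by
  rintro ⟨q, huq, hqv⟩
  have hheight := (dagReach_iff hG).1 huq
  have huv := hG.dist_triangle (u := u) (v := q) (w := v)
  obtain ⟨hv, -⟩ := hasSlack_zero (r := r) hG v q
  rw [dist_comm (u := v)] at hv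
  have := h.1
  omega

lemma NearShadow.of_dagReach (huv : dagReach G r u v) (h : NearShadow G r D v w) :
    NearShadow G r D u w := by
  obtain ⟨q, hvq, hqw⟩ := h
  exact ⟨q, huv.trans hvq, hqw⟩

lemma nearShadow_of_adj {q : V} (huq : dagReach G r u q) (hqv : G.Adj q v) (hD : 1 ≤ D) :
    NearShadow G r D u v :=
  ⟨q, huq, (dist_eq_one_iff_adj.2 hqv).trans_le hD⟩

end Slack

section GeodesicSeq

variable {G : SimpleGraph V} {r : V} {f : ℕ → V} {n i j k M N : ℕ}

/-- The vertices `f 0, …, f n` form a shortest path in this order. -/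
def IsGeodesicSeq (G : SimpleGraph V) (f : ℕ → V) (n : ℕ) : Prop :=
  ∀ i j, i ≤ j → j ≤ n → i + G.dist (f i) (f j) = j

lemma isGeodesicSeq_getVert {x y : V} {p : G.Walk x y} (hp : p.length = G.dist x y) :
    IsGeodesicSeq G p.getVert p.length := fun i j hij hj => by
  rw [dist_getVert_getVert hp hij hj, Nat.add_sub_cancel' hij]

namespace IsGeodesicSeq

lemma injOn (hf : IsGeodesicSeq G f n) (hi : i ≤ n) (hj : j ≤ n) (h : f i = f j) : i = j := by
  wlog hij : i ≤ j generalizing i j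
  · exact (this hj hi h.symm (le_of_not_ge hij)).symm
  have := hf i j hij hj
  rwa [h, dist_self] at this

lemma adj_succ (hf : IsGeodesicSeq G f n) (hi : i + 1 ≤ n) : G.Adj (f i) (f (i + 1)) := by
  rw [← dist_eq_one_iff_adj]
  have := hf i (i + 1) i.le_succ hi
  omega

lemma exists_isPath (hf : IsGeodesicSeq G f n) (hij : i ≤ j) (hj : j ≤ n) :
    ∃ p : G.Walk (f i) (f j), p.IsPath ∧ ∀ x, x ∈ p.support ↔ x ∈ f '' Set.Icc i j := by
  induction j, hij using Nat.le_induction with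
  | base => exact ⟨Walk.nil, Walk.IsPath.nil, fun x => by simp⟩
  | succ j hij ih =>
    obtain ⟨p, hp, hsupp⟩ := ih (by omega)
    refine ⟨p.concat (hf.adj_succ hj), hp.concat ?_ _, fun x => ?_⟩
    · rw [hsupp]
      rintro ⟨k, hk, hkj⟩
      have := hf.injOn (hk.2.trans (by omega)) hj hkj
      exact absurd hk.2 (by omega)
    · have hIcc : Set.Icc i (j + 1) = insert (j + 1) (Set.Icc i j) :=
        (Set.insert_Icc_right_eq_Icc_add_one (by omega)).symm
      rw [Walk.support_concat, List.mem_append, hsupp, List.mem_singleton, hIcc,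
        Set.image_insert_eq, Set.mem_insert_iff, or_comm]

lemma hasSlack_trans (hf : IsGeodesicSeq G f n) (hij : i ≤ j) (hjk : j ≤ k) (hk : k ≤ n)
    (h : HasSlack G r M (f i) (f j)) (h' : HasSlack G r N (f j) (f k)) :
    HasSlack G r (M + N) (f i) (f k) := by
  have hik := hf i k (hij.trans hjk) hk
  have hij := hf i j hij (hjk.trans hk)
  have hjk := hf j k hjk hk
  exact h.trans h' (by omega)

lemma hasSlack_extend_right (hG : G.Connected) (hf : IsGeodesicSeq G f n) (hij : i ≤ j)
    (hjk : j ≤ k) (hk : k ≤ n) (h : HasSlack G r M (f i) (f j)) : HasSlack G r M (f i) (f k) :=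
  hf.hasSlack_trans hij hjk hk h (hasSlack_zero hG _ _)

lemma hasSlack_extend_left (hG : G.Connected) (hf : IsGeodesicSeq G f n) (hij : i ≤ j)
    (hjk : j ≤ k) (hk : k ≤ n) (h : HasSlack G r M (f j) (f k)) : HasSlack G r M (f i) (f k) := by
  simpa using hf.hasSlack_trans hij hjk hk (hasSlack_zero hG _ _) h

end IsGeodesicSeq

end GeodesicSeq

section Antichain

variable {G : SimpleGraph V} {r : V} {f : ℕ → V} {n : ℕ}

lemma IsGeodesicSeq.exists_hasSlack_of_isAntichainSet (hG : G.Connected) (hf : IsGeodesicSeq G f n)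
    {A : Finset V} (hA : ∀ a ∈ A, ∃ k ≤ n, f k = a) (hanti : IsAntichainSet G r A) :
    ∃ e : ℕ → ℕ, (∀ i < A.card, e i ≤ n) ∧ ∀ i m, i + m < A.card →
      e i ≤ e (i + m) ∧ HasSlack G r m (f (e i)) (f (e (i + m))) := by
  classical
  let P : ℕ → Prop := fun k => k ≤ n ∧ f k ∈ A
  have hfin : (Set.ofPred P).Finite := (Set.finite_Iic n).subset fun k hk => hk.1
  have hcard : A.card ≤ hfin.toFinset.card := by
    refine (Finset.card_le_card fun a ha => ?_).trans (Finset.card_image_le (f := f))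
    obtain ⟨k, hk, rfl⟩ := hA a ha
    exact Finset.mem_image_of_mem f (hfin.mem_toFinset.2 ⟨hk, ha⟩)
  have hP (i : ℕ) (hi : i < A.card) : P (Nat.nth P i) :=
    Nat.nth_mem_of_lt_card hfin (hi.trans_le hcard)
  have hmono (i : ℕ) (hi : i + 1 < A.card) : Nat.nth P i < Nat.nth P (i + 1) :=
    Nat.nth_lt_nth_of_lt_card hfin i.lt_succ_self (hi.trans_le hcard)
  refine ⟨Nat.nth P, fun i hi => (hP i hi).1, fun i m hm => ?_⟩
  induction m with
  | zero => exact ⟨le_rfl, hasSlack_zero hG _ _⟩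
  | succ m ih =>
    have hlt := hmono (i + m) hm
    obtain ⟨hle, hslack⟩ := ih (by omega)
    obtain ⟨hn, hmem⟩ := hP (i + m) (by omega)
    obtain ⟨hn', hmem'⟩ := hP (i + m + 1) hm
    obtain ⟨hdown, hup⟩ := hanti _ hmem _ hmem' fun h => hlt.ne (hf.injOn hn hn' h)
    exact ⟨hle.trans hlt.le, hf.hasSlack_trans hle hlt.le hn' hslack (hasSlack_one hG hdown hup)⟩

end Antichain

section DescentTriangle

variable {G : SimpleGraph V} {r u v c x y : V}

/-- A cycle formed by a path `base` from `u` to `v` and by descents `left` and `right` from `u` and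
`v` to a common vertex `apex`, any two of which meet only in their common end. -/
structure DescentTriangle (G : SimpleGraph V) (r u v : V) where
  apex : V
  left : G.Walk u apex
  right : G.Walk v apex
  base : G.Walk u v
  ne : u ≠ v
  isDescending_left : IsDescending G r left
  isDescending_right : IsDescending G r right
  isPath_base : base.IsPath
  eq_apex_of_mem : ∀ x ∈ left.support, x ∈ right.support → x = apex
  eq_left_of_mem : ∀ x ∈ left.support, x ∈ base.support → x = u
  eq_right_of_mem : ∀ x ∈ right.support, x ∈ base.support → x = v

namespace DescentTriangle

/-- The vertices of the cycle formed by the three sides. -/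
def carrier (T : DescentTriangle G r u v) : Set V :=
  {x | x ∈ T.left.support ∨ x ∈ T.right.support ∨ x ∈ T.base.support}

lemma isArcPair [DecidableEq V] (hG : G.Connected) (T : DescentTriangle G r u v)
    (hc : c ∈ T.left.support) (hcu : G.dist r c < G.dist r u) :
    IsArcPair ((T.left.takeUntil c hc).reverse.append T.base)
      ((T.left.dropUntil c hc).append T.right.reverse) where
  ne := by
    rintro rfl
    exact hcu.ne (congrArg _ (T.eq_left_of_mem _ hc T.base.end_mem_support))
  isPath_left := by
    refine isPath_append ((T.isDescending_left.isPath hG).takeUntil hc).reverse T.isPath_base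
      fun x hx hx' => T.eq_left_of_mem x ?_ hx'
    rw [Walk.support_reverse, List.mem_reverse] at hx
    exact T.left.support_takeUntil_subset_support hc hx
  isPath_right := by
    refine isPath_append ((T.isDescending_left.isPath hG).dropUntil hc)
      (T.isDescending_right.isPath hG).reverse fun x hx hx' => T.eq_apex_of_mem x ?_ ?_
    · exact T.left.support_dropUntil_subset_support hc hx
    · rwa [Walk.support_reverse, List.mem_reverse] at hx'
  eq_or_eq x hxR hxS := by
    rw [Walk.mem_support_append_iff, Walk.support_reverse, List.mem_reverse] at hxR hxS
    rw [T.isDescending_left.mem_takeUntil_iff hG hc] at hxR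
    rw [T.isDescending_left.mem_dropUntil_iff hG hc] at hxS
    rcases hxR with ⟨hx, hcx⟩ | hx <;> rcases hxS with ⟨hx', hxc⟩ | hx'
    · exact .inl (T.isDescending_left.eq_of_dist_eq hG hx hc (hxc.antisymm hcx))
    · obtain rfl := T.eq_apex_of_mem x hx hx'
      exact .inl ((T.isDescending_left.dagReach_end_of_mem hc).eq_of_dist_le hG hcx).symm
    · obtain rfl := T.eq_left_of_mem x hx' hx
      exact absurd hcu hxc.not_gt
    · exact .inr (T.eq_right_of_mem x hx' hx)

lemma mem_support_arcs [DecidableEq V] (T : DescentTriangle G r u v) (hc : c ∈ T.left.support) :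
    x ∈ (((T.left.takeUntil c hc).reverse.append T.base).append
      ((T.left.dropUntil c hc).append T.right.reverse).reverse).support ↔ x ∈ T.carrier := by
  have hleft : x ∈ T.left.support ↔
      x ∈ (T.left.takeUntil c hc).support ∨ x ∈ (T.left.dropUntil c hc).support := by
    rw [← Walk.mem_support_append_iff, Walk.take_spec]
  simp only [carrier, Set.mem_ofPred_eq, hleft, Walk.mem_support_append_iff, Walk.support_reverse,
    List.mem_reverse]
  tauto

lemma hasFatTurtle (hG : G.Connected) (T : DescentTriangle G r u v) (hc : c ∈ T.left.support)
    (hcu : G.dist r c < G.dist r u) {W : G.Walk x y} (hW : IsContactWalk G T.carrier W) {t : ℕ}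
    (ht : t + 2 ≤ G.dist x y)
    (hx : ∀ k ∈ T.carrier, G.Adj x k → k ∈ T.left.support ∧ G.dist r c < G.dist r k)
    (hy : ∀ k ∈ T.carrier, G.Adj y k →
      k ∉ T.base.support ∧ (k ∈ T.left.support → G.dist r k < G.dist r c)) :
    HasFatTurtle G t := by
  classical
  refine (T.isArcPair hG hc hcu).hasFatTurtle hG (p := W) ?_ ht ?_ ?_
  · simpa only [T.mem_support_arcs hc, Set.ofPred_mem_eq] using hW
  · intro k hk hxk
    obtain ⟨hk, hck⟩ := hx k ((T.mem_support_arcs hc).1 hk) hxk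
    refine ⟨?_, ?_, ?_⟩
    · rw [Walk.mem_support_append_iff, Walk.support_reverse, List.mem_reverse,
        T.isDescending_left.mem_takeUntil_iff hG hc]
      exact .inl ⟨hk, hck.le⟩
    · rintro rfl
      exact hck.false
    · rintro rfl
      exact T.ne (T.eq_left_of_mem _ hk T.base.end_mem_support).symm
  · intro k hk hyk
    rw [T.mem_support_arcs hc] at hk
    obtain ⟨hbase, hleft⟩ := hy k hk hyk
    refine ⟨?_, ?_, ?_⟩
    · rw [Walk.mem_support_append_iff, T.isDescending_left.mem_dropUntil_iff hG hc,
        Walk.support_reverse, List.mem_reverse]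
      rcases hk with hk | hk | hk
      · exact .inl ⟨hk, (hleft hk).le⟩
      · exact .inr hk
      · exact absurd hk hbase
    · rintro rfl
      exact (hleft hc).false
    · rintro rfl
      exact hbase T.base.end_mem_support

end DescentTriangle

end DescentTriangle

section Lowest

variable {G : SimpleGraph V} {r : V} {f : ℕ → V} {n i y z : ℕ}

/-- Among `f 0, …, f n`, the vertex `f j` reaches nothing but itself in the BFS DAG. -/
def IsLowest (G : SimpleGraph V) (r : V) (f : ℕ → V) (n j : ℕ) : Prop :=
  ∀ k ≤ n, dagReach G r (f j) (f k) → k = j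

lemma IsGeodesicSeq.exists_isLowest (hG : G.Connected) (hf : IsGeodesicSeq G f n) (hi : i ≤ n) :
    ∃ j ≤ n, dagReach G r (f i) (f j) ∧ IsLowest G r f n j := by
  obtain ⟨j, ⟨hj, hij⟩, hmin⟩ := exists_minimalFor_of_wellFoundedLT
    (fun k => k ≤ n ∧ dagReach G r (f i) (f k)) (fun k => G.dist r (f k))
    ⟨i, hi, Relation.ReflTransGen.refl⟩
  refine ⟨j, hj, hij, fun k hk hjk => hf.injOn hk hj ?_⟩
  exact (hjk.eq_of_dist_le hG (hmin ⟨hk, hij.trans hjk⟩ (hjk.dist_le hG))).symm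

lemma exists_highest_common_descendant (hG : G.Connected) (r u v : V) :
    ∃ m, dagReach G r u m ∧ dagReach G r v m ∧
      ∀ q, dagReach G r u q → dagReach G r v q → G.dist r q ≤ G.dist r m := by
  obtain ⟨m, ⟨hum, hvm⟩, hmin⟩ := exists_minimalFor_of_wellFoundedLT
    (fun q => dagReach G r u q ∧ dagReach G r v q) (fun q => G.dist u q)
    ⟨r, dagReach_root hG u, dagReach_root hG v⟩
  refine ⟨m, hum, hvm, fun q huq hvq => ?_⟩
  have hle : G.dist u m ≤ G.dist u q := by
    by_contra! hlt
    exact hlt.not_ge (hmin ⟨huq, hvq⟩ hlt.le)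
  have hm := (dagReach_iff hG).1 hum
  have hq := (dagReach_iff hG).1 huq
  omega

lemma IsGeodesicSeq.exists_descentTriangle (hG : G.Connected) (hf : IsGeodesicSeq G f n)
    (hyz : y < z) (hz : z ≤ n) (hylow : IsLowest G r f n y) (hzlow : IsLowest G r f n z) :
    ∃ T : DescentTriangle G r (f y) (f z), ∀ x, x ∈ T.base.support ↔ x ∈ f '' Set.Icc y z := by
  obtain ⟨m, hym, hzm, hmax⟩ := exists_highest_common_descendant hG r (f y) (f z)
  obtain ⟨left, hleft⟩ := hym.exists_isDescending
  obtain ⟨right, hright⟩ := hzm.exists_isDescending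
  obtain ⟨base, hbase, hsupp⟩ := hf.exists_isPath hyz.le hz
  refine ⟨⟨m, left, right, base, fun h => hyz.ne (hf.injOn (hyz.le.trans hz) hz h), hleft, hright,
    hbase, fun x hxl hxr => ?_, fun x hxl hxb => ?_, fun x hxr hxb => ?_⟩, hsupp⟩
  · exact (hleft.dagReach_end_of_mem hxl).eq_of_dist_le hG
      (hmax x (hleft.dagReach_of_mem hxl) (hright.dagReach_of_mem hxr))
  · obtain ⟨k, hk, rfl⟩ := (hsupp x).1 hxb
    rw [hylow k (hk.2.trans hz) (hleft.dagReach_of_mem hxl)]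
  · obtain ⟨k, hk, rfl⟩ := (hsupp x).1 hxb
    rw [hzlow k (hk.2.trans hz) (hright.dagReach_of_mem hxr)]

end Lowest

section Separated

variable {G : SimpleGraph V} {r v : V} {f : ℕ → V} {n D x a y w z k l : ℕ}

/-- Five positions on a shortest path `f 0, …, f n` such that the descents from `f x`, `f y` and
`f z` come within distance `D` of the path only before `f a`, between `f a` and `f w`, and after
`f w` respectively. The first of these conditions is recorded in the stronger form of a slack. -/
structure IsSeparated (G : SimpleGraph V) (r : V) (f : ℕ → V) (n D x a y w z : ℕ) : Prop where
  x_le_a : x ≤ a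
  a_lt_y : a < y
  y_lt_w : y < w
  w_lt_z : w < z
  z_le_n : z ≤ n
  hasSlack : ∀ k, a ≤ k → k ≤ n → HasSlack G r (2 * D + 3) (f x) (f k)
  not_nearShadow_y : ∀ k ≤ n, k ≤ a ∨ w ≤ k → ¬ NearShadow G r D (f y) (f k)
  not_nearShadow_z : ∀ k ≤ w, ¬ NearShadow G r D (f z) (f k)

lemma IsGeodesicSeq.exists_isSeparated (hG : G.Connected) (hf : IsGeodesicSeq G f n) {y₀ z₀ : ℕ}
    (hxa : x ≤ a) (hay : a ≤ y₀) (hyw : y₀ ≤ w) (hwz : w ≤ z₀) (hz : z₀ ≤ n)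
    (hxa' : HasSlack G r (2 * D + 3) (f x) (f a)) (hay' : HasSlack G r (2 * D + 3) (f a) (f y₀))
    (hyw' : HasSlack G r (2 * D + 3) (f y₀) (f w)) (hwz' : HasSlack G r (2 * D + 3) (f w) (f z₀)) :
    ∃ y z, IsSeparated G r f n D x a y w z ∧ IsLowest G r f n y ∧ IsLowest G r f n z := by
  obtain ⟨y, hyn, hy, hylow⟩ := hf.exists_isLowest (r := r) hG (i := y₀) (by omega)
  obtain ⟨z, hzn, hz, hzlow⟩ := hf.exists_isLowest (r := r) hG hz
  have not_near {i k : ℕ} (h : HasSlack G r (2 * D + 3) (f i) (f k)) :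
      ¬ NearShadow G r D (f i) (f k) := h.not_nearShadow hG (by omega)
  have hnear_y (k : ℕ) (hkn : k ≤ n) (hk : k ≤ a ∨ w ≤ k) : ¬ NearShadow G r D (f y) (f k) := by
    refine mt (NearShadow.of_dagReach hy) (not_near ?_)
    rcases hk with hk | hk
    · exact (hf.hasSlack_extend_left hG hk hay (by omega) hay').symm
    · exact hf.hasSlack_extend_right hG hyw hk hkn hyw'
  have hnear_z (k : ℕ) (hk : k ≤ w) : ¬ NearShadow G r D (f z) (f k) := by
    refine mt (NearShadow.of_dagReach hz) (not_near ?_)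
    exact (hf.hasSlack_extend_left hG hk hwz (by omega) hwz').symm
  have near_self (i : ℕ) : NearShadow G r D (f i) (f i) :=
    ⟨f i, Relation.ReflTransGen.refl, by simp⟩
  refine ⟨y, z, ⟨hxa, ?_, ?_, ?_, hzn, fun k hak hkn =>
    hf.hasSlack_extend_right hG hxa hak hkn hxa', hnear_y, hnear_z⟩, hylow, hzlow⟩
  · exact not_le.1 fun h => hnear_y y hyn (.inl h) (near_self y)
  · exact not_le.1 fun h => hnear_y y hyn (.inr h) (near_self y)
  · exact not_le.1 fun h => hnear_z z h (near_self z)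

/-- The vertex `v` lies on a descent to the root from `x` or, below the apex, from the apex. When
`x` is off the triangle, a walk from `x` to the apex via the root first meets a neighbour of the
triangle at such a vertex. -/
def DescentTriangle.IsRootward {u u' : V} (T : DescentTriangle G r u u') (x v : V) : Prop :=
  dagReach G r x v ∨ dagReach G r T.apex v ∧ G.dist r v < G.dist r T.apex

namespace IsSeparated

variable {T : DescentTriangle G r (f y) (f z)}

lemma notMem_carrier (hs : IsSeparated G r f n D x a y w z) (hf : IsGeodesicSeq G f n)
    (hT : ∀ v, v ∈ T.base.support ↔ v ∈ f '' Set.Icc y z) : f x ∉ T.carrier := by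
  have ⟨hxa, hay, hyw, hwz, hzn, _, _, _⟩ := hs
  rintro (hx | hx | hx)
  · exact hs.not_nearShadow_y x (by omega) (.inl hxa)
      ⟨f x, T.isDescending_left.dagReach_of_mem hx, by simp⟩
  · exact hs.not_nearShadow_z x (by omega)
      ⟨f x, T.isDescending_right.dagReach_of_mem hx, by simp⟩
  · obtain ⟨k, hk, hkx⟩ := (hT _).1 hx
    have := hf.injOn (hk.2.trans hzn) (by omega) hkx
    exact absurd hk.1 (by omega)

lemma exists_isContactWalk (hG : G.Connected) (hs : IsSeparated G r f n D x a y w z)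
    (hf : IsGeodesicSeq G f n) (hT : ∀ v, v ∈ T.base.support ↔ v ∈ f '' Set.Icc y z) :
    ∃ l < y, ∃ v, T.IsRootward (f x) v ∧ ∃ W : G.Walk (f l) v, IsContactWalk G T.carrier W := by
  have hxy := hs.x_le_a.trans hs.a_lt_y.le
  obtain ⟨p, -, hp⟩ := hf.exists_isPath hxy ((hs.y_lt_w.trans hs.w_lt_z).le.trans hs.z_le_n)
  obtain ⟨q, hq⟩ := (dagReach_root (r := r) hG (f x)).exists_isDescending
  obtain ⟨q', hq'⟩ := (dagReach_root (r := r) hG T.apex).exists_isDescending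
  have hy : f y ∈ T.carrier := .inl T.left.start_mem_support
  have hapex : T.apex ∈ T.carrier := .inl T.left.end_mem_support
  obtain ⟨u, hu, v, hv, W, hW⟩ := _root_.exists_isContactWalk p (q.append q'.reverse)
    (hs.notMem_carrier hf hT) hy hapex
  obtain ⟨l, hl, rfl⟩ := (hp u).1 hu
  have hly : l ≠ y := by
    rintro rfl
    exact hW.notMem _ W.start_mem_support hy
  refine ⟨l, lt_of_le_of_ne hl.2 hly, v, ?_, W, hW⟩
  rw [Walk.mem_support_append_iff, Walk.support_reverse, List.mem_reverse] at hv
  refine hv.imp hq.dagReach_of_mem fun hv => ⟨hq'.dagReach_of_mem hv, not_le.1 fun hle => ?_⟩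
  rw [(hq'.dagReach_of_mem hv).eq_of_dist_le hG hle] at hapex
  exact hW.notMem _ W.end_mem_support hapex

lemma lt_dist_of_isRootward (hG : G.Connected) (hs : IsSeparated G r f n D x a y w z)
    (hv : T.IsRootward (f x) v) (hak : a ≤ k) (hkn : k ≤ n) : D < G.dist v (f k) := by
  by_contra! hle
  rcases hv with hv | ⟨hv, -⟩
  · exact (hs.hasSlack k hak hkn).not_nearShadow hG (by omega) ⟨v, hv, hle⟩
  · have hy := T.isDescending_left.dagReach_start_end.trans hv
    have hz := T.isDescending_right.dagReach_start_end.trans hv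
    rcases le_total k w with hkw | hwk
    · exact hs.not_nearShadow_z k hkw ⟨v, hz, hle⟩
    · exact hs.not_nearShadow_y k hkn (.inr hwk) ⟨v, hy, hle⟩

lemma mem_left_of_adj (hs : IsSeparated G r f n D x a y w z) (hf : IsGeodesicSeq G f n)
    (hT : ∀ v, v ∈ T.base.support ↔ v ∈ f '' Set.Icc y z) (hD : 1 ≤ D) (hl : l < y)
    (hv : v ∈ T.carrier) (hlv : G.Adj (f l) v) : v ∈ T.left.support := by
  have hlw := hl.trans hs.y_lt_w
  have hzn := hs.z_le_n
  rcases hv with hv | hv | hv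
  · exact hv
  · exact absurd (nearShadow_of_adj (T.isDescending_right.dagReach_of_mem hv) hlv.symm hD)
      (hs.not_nearShadow_z l hlw.le)
  · obtain ⟨k, ⟨hyk, hkz⟩, rfl⟩ := (hT v).1 hv
    have := hf l k (by omega) (by omega)
    rw [dist_eq_one_iff_adj.2 hlv] at this
    obtain rfl : k = y := by omega
    exact T.left.start_mem_support

lemma lt_of_adj_left (hs : IsSeparated G r f n D x a y w z) (hD : 1 ≤ D) (hl : l < y)
    (hv : v ∈ T.left.support) (hlv : G.Adj (f l) v) : a < l := by
  have hyn := (hs.y_lt_w.trans hs.w_lt_z).le.trans hs.z_le_n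
  by_contra! hla
  exact hs.not_nearShadow_y l (by omega) (.inl hla)
    (nearShadow_of_adj (T.isDescending_left.dagReach_of_mem hv) hlv.symm hD)

lemma lt_dist_apex (hs : IsSeparated G r f n D x a y w z) (hl : l < y) :
    D < G.dist T.apex (f l) := by
  by_contra! hle
  exact hs.not_nearShadow_z l (hl.le.trans hs.y_lt_w.le)
    ⟨T.apex, T.isDescending_right.dagReach_start_end, hle⟩

lemma exists_lowest_neighbour (hs : IsSeparated G r f n D x a y w z) (hD : 1 ≤ D) (hl : l < y)
    (hv : v ∈ T.left.support) (hlv : G.Adj (f l) v) :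
    ∃ q ∈ T.left.support, G.Adj (f l) q ∧ ∃ c ∈ T.left.support, dagStep G r q c ∧
      ∀ k ∈ T.left.support, G.Adj (f l) k → G.dist r c < G.dist r k := by
  obtain ⟨q, ⟨hq, hlq⟩, hmin⟩ := exists_minimalFor_of_wellFoundedLT
    (fun k => k ∈ T.left.support ∧ G.Adj (f l) k) (G.dist r) ⟨v, hv, hlv⟩
  have hqa : q ≠ T.apex := by
    rintro rfl
    have := hs.lt_dist_apex (T := T) hl
    rw [dist_eq_one_iff_adj.2 hlq.symm] at this
    omega
  obtain ⟨c, hc, hqc⟩ := T.isDescending_left.exists_dagStep hq hqa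
  refine ⟨q, hq, hlq, c, hc, hqc, fun k hk hlk => ?_⟩
  by_contra! hle
  have hlt : G.dist r k < G.dist r q := by
    rw [hqc.2]
    omega
  exact hlt.not_ge (hmin ⟨hk, hlk⟩ hlt.le)

lemma dist_lt_of_adj_dagReach (hG : G.Connected) (hs : IsSeparated G r f n D x a y w z)
    (hf : IsGeodesicSeq G f n) (hD : 2 ≤ D) (hal : a ≤ l) (hl : l < y) {q c b : V}
    (hyq : dagReach G r (f y) q) (hlq : G.Adj (f l) q) (hqc : dagStep G r q c)
    (hv : dagReach G r (f x) v) (hyb : dagReach G r (f y) b) (hvb : G.Adj v b) :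
    G.dist r b < G.dist r c := by
  by_contra! hcb
  have ⟨hxa, _, hyw, hwz, hzn, _, _, _⟩ := hs
  rw [dagReach_iff hG] at hyq hv hyb
  have hlq := dist_eq_one_iff_adj.2 hlq
  have hvb := dist_eq_one_iff_adj.2 hvb
  have hdetour : G.dist (f x) (f l) + G.dist (f y) q ≤ G.dist (f x) v + G.dist (f y) b + 2 := by
    have hxl := hf x l (by omega) (by omega)
    have hly := hf l y hl.le (by omega)
    have hxy := hf x y (by omega) (by omega)
    have hxvy := hG.dist_triangle (u := f x) (v := v) (w := f y)
    have hvby := hG.dist_triangle (u := v) (v := b) (w := f y)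
    have hylq := hG.dist_triangle (u := f y) (v := f l) (w := q)
    rw [dist_comm (u := b)] at hvby
    rw [dist_comm (v := f l)] at hylq
    omega
  have hdescent : G.dist (f y) b ≤ G.dist (f y) q + 1 := by
    have := hqc.2
    omega
  have hdrop : G.dist r (f l) ≤ G.dist r v + 3 := by
    have hb := (hasSlack_zero (r := r) hG v b).2
    have hq := (hasSlack_zero (r := r) hG (f l) q).1
    have := hqc.2
    omega
  have := (hs.hasSlack l hal (by omega)).1
  omega

lemma dist_lt_of_adj_below_apex (hG : G.Connected) (hs : IsSeparated G r f n D x a y w z)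
    (hD : 2 ≤ D) (hl : l < y) {q c b : V} (hlq : G.Adj (f l) q) (hc : c ∈ T.left.support)
    (hqc : dagStep G r q c) (hv : G.dist r v < G.dist r T.apex) (hvb : G.Adj v b) :
    G.dist r b < G.dist r c := by
  by_contra! hcb
  have hcapex : G.dist r c ≤ G.dist r T.apex := by
    have := (hasSlack_zero (r := r) hG v b).2
    rw [dist_eq_one_iff_adj.2 hvb] at this
    omega
  obtain rfl := (T.isDescending_left.dagReach_end_of_mem hc).eq_of_dist_le hG hcapex
  have hapex := hs.lt_dist_apex (T := T) hl
  have := hG.dist_triangle (u := T.apex) (v := q) (w := f l)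
  rw [dist_eq_one_iff_adj.2 hqc.1.symm, dist_eq_one_iff_adj.2 hlq.symm] at this
  omega

lemma hasFatTurtle (hG : G.Connected) {t : ℕ} (hs : IsSeparated G r f n (t + 2) x a y w z)
    (hf : IsGeodesicSeq G f n) (hT : ∀ v, v ∈ T.base.support ↔ v ∈ f '' Set.Icc y z) :
    HasFatTurtle G (t + 1) := by
  obtain ⟨l, hly, v, hv, W, hW⟩ := hs.exists_isContactWalk hG hf hT
  have hD : 2 ≤ t + 2 := by omega
  have hleft (k : V) (hk : k ∈ T.carrier) (hlk : G.Adj (f l) k) : k ∈ T.left.support :=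
    hs.mem_left_of_adj hf hT (by omega) hly hk hlk
  obtain ⟨k, hk, hlk⟩ := hW.exists_adj_start
  have hal := hs.lt_of_adj_left (by omega) hly (hleft k hk hlk) hlk
  obtain ⟨q, hq, hlq, c, hc, hqc, hmin⟩ :=
    hs.exists_lowest_neighbour (by omega) hly (hleft k hk hlk) hlk
  have hdist (k : ℕ) (hak : a ≤ k) (hkz : k ≤ z) : t + 2 < G.dist v (f k) :=
    hs.lt_dist_of_isRootward hG hv hak (hkz.trans hs.z_le_n)
  have hlz : l ≤ z := (hly.trans (hs.y_lt_w.trans hs.w_lt_z)).le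
  refine T.hasFatTurtle hG hc ?_ hW ?_
    (fun k hk hlk => ⟨hleft k hk hlk, hmin k (hleft k hk hlk) hlk⟩)
    fun k hk hvk => ⟨fun hbase => ?_, fun hk => ?_⟩
  · exact (hmin q hq hlq).trans_le ((T.isDescending_left.dagReach_of_mem hq).dist_le hG)
  · rw [dist_comm]
    exact hdist l hal.le hlz
  · obtain ⟨j, ⟨hyj, hjz⟩, rfl⟩ := (hT k).1 hbase
    have := hdist j (hs.a_lt_y.le.trans hyj) hjz
    rw [dist_eq_one_iff_adj.2 hvk] at this
    omega
  · rcases hv with hv | ⟨-, hv⟩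
    · exact hs.dist_lt_of_adj_dagReach hG hf hD hal.le hly
        (T.isDescending_left.dagReach_of_mem hq) hlq hqc hv
        (T.isDescending_left.dagReach_of_mem hk) hvk
    · exact hs.dist_lt_of_adj_below_apex hG hD hly hlq hc hqc hv hvk

end IsSeparated

end Separated

theorem statement7_general (G : SimpleGraph V) (hG : G.Connected) (t : ℕ) {r x y : V}
    {p : G.Walk x y} (hp : IsIsometricPath G p) {A : Finset V} (hA : ∀ a ∈ A, a ∈ p.support)
    (hanti : IsAntichainSet G r A) (hcard : 8 * t + 29 ≤ A.card) : HasFatTurtle G (t + 1) := by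
  have hf := isGeodesicSeq_getVert hp.2
  have hA' (a : V) (ha : a ∈ A) : ∃ k ≤ p.length, p.getVert k = a := by
    obtain ⟨k, hk, hkp⟩ := Walk.mem_support_iff_exists_getVert.1 (hA a ha)
    exact ⟨k, hkp, hk⟩
  obtain ⟨e, hen, he⟩ := hf.exists_hasSlack_of_isAntichainSet hG hA' hanti
  let M := 2 * (t + 2) + 3
  obtain ⟨hxa, hxa'⟩ := he 0 M (by omega)
  obtain ⟨hay, hay'⟩ := he (0 + M) M (by omega)
  obtain ⟨hyw, hyw'⟩ := he (0 + M + M) M (by omega)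
  obtain ⟨hwz, hwz'⟩ := he (0 + M + M + M) M (by omega)
  obtain ⟨y, z, hs, hy, hz⟩ := hf.exists_isSeparated hG hxa hay hyw hwz (hen _ (by omega))
    hxa' hay' hyw' hwz'
  obtain ⟨T, hT⟩ := hf.exists_descentTriangle hG (hs.y_lt_w.trans hs.w_lt_z) hs.z_le_n hy hz
  exact hs.hasFatTurtle hG hf hT

/-- For `t ≥ 1`, if the isometric path antichain cover number of a
connected graph `G` is at least `8t + 64` (for every root `r` some isometric
path carries an antichain w.r.t. `r` of size at least `8t + 64`), then `G`
contains a `(t+1)`-fat turtle as an induced subgraph. -/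
theorem statement7 [Fintype V] (G : SimpleGraph V) (hG : G.Connected) (t : ℕ) (ht : 1 ≤ t)
    (h : ∀ r : V, ∃ (x y : V) (p : G.Walk x y), IsIsometricPath G p ∧
      ∃ A : Finset V, (∀ a ∈ A, a ∈ p.support) ∧ IsAntichainSet G r A ∧
        8 * t + 64 ≤ A.card) :
    HasFatTurtle G (t + 1) := by
  obtain ⟨r⟩ := hG.nonempty
  obtain ⟨x, y, p, hp, A, hA, hanti, hcard⟩ := h r
  exact statement7_general G hG t hp hA hanti (by omega)
end

section
/- Let G be a graph obtained from a (theta, prism, pyramid)-free graph by the following operation: contract all edges of G both of whose endpoints lie in some triangle. If G is an outerstring graph containing an induced 4-theta, 4-prism, or 4-pyramid, the contraction yields a 3-theta that is an outerstring graph; adding an apex vertex joined by paths of length ≥ 2 to all vertices yields a string graph containing a full subdivision of K_{3,3} as an induced subgraph — a contradiction. Hence every outerstring graph is (4-theta, 4-prism, 4-pyramid)-free. -/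
open SimpleGraph

variable {V : Type*}

/-- `G` contains an (induced) `t`-theta: three internally vertex-disjoint induced
paths from `a` to `b` of lengths at least `t+1`, with no edges between the paths
except at `a` and `b`. -/
def HasTTheta (G : SimpleGraph V) (t : ℕ) : Prop :=
  ∃ (a b : V) (p1 p2 p3 : G.Walk a b),
    p1.IsPath ∧ p2.IsPath ∧ p3.IsPath ∧
    t + 1 ≤ p1.length ∧ t + 1 ≤ p2.length ∧ t + 1 ≤ p3.length ∧
    (∀ x, x ∈ p1.support → x ∈ p2.support → x = a ∨ x = b) ∧
    (∀ x, x ∈ p1.support → x ∈ p3.support → x = a ∨ x = b) ∧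
    (∀ x, x ∈ p2.support → x ∈ p3.support → x = a ∨ x = b) ∧
    (∀ x y, (x ∈ p1.support ∨ x ∈ p2.support ∨ x ∈ p3.support) →
      (y ∈ p1.support ∨ y ∈ p2.support ∨ y ∈ p3.support) → G.Adj x y →
      s(x, y) ∈ p1.edges ∨ s(x, y) ∈ p2.edges ∨ s(x, y) ∈ p3.edges)

/-- `G` contains an (induced) `t`-prism: three vertex-disjoint induced paths
`a1…b1`, `a2…b2`, `a3…b3` of lengths at least `t`, with triangles `a1a2a3` and
`b1b2b3`, and no other edges between the paths. -/
def HasTPrism (G : SimpleGraph V) (t : ℕ) : Prop :=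
  ∃ (a1 a2 a3 b1 b2 b3 : V) (p1 : G.Walk a1 b1) (p2 : G.Walk a2 b2) (p3 : G.Walk a3 b3),
    p1.IsPath ∧ p2.IsPath ∧ p3.IsPath ∧
    t ≤ p1.length ∧ t ≤ p2.length ∧ t ≤ p3.length ∧
    (∀ x, x ∈ p1.support → x ∉ p2.support) ∧
    (∀ x, x ∈ p1.support → x ∉ p3.support) ∧
    (∀ x, x ∈ p2.support → x ∉ p3.support) ∧
    G.Adj a1 a2 ∧ G.Adj a2 a3 ∧ G.Adj a1 a3 ∧
    G.Adj b1 b2 ∧ G.Adj b2 b3 ∧ G.Adj b1 b3 ∧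
    (∀ x y, (x ∈ p1.support ∨ x ∈ p2.support ∨ x ∈ p3.support) →
      (y ∈ p1.support ∨ y ∈ p2.support ∨ y ∈ p3.support) → G.Adj x y →
      s(x, y) ∈ p1.edges ∨ s(x, y) ∈ p2.edges ∨ s(x, y) ∈ p3.edges ∨
      s(x, y) ∈ ({s(a1, a2), s(a2, a3), s(a1, a3),
                  s(b1, b2), s(b2, b3), s(b1, b3)} : Set (Sym2 V)))

/-- `G` contains an (induced) `t`-pyramid: three induced paths `a…b1`, `a…b2`,
`a…b3` of lengths at least `t`, two of which have lengths at least `t+1`,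
vertex-disjoint except at `a`, with triangle `b1b2b3`, and no other edges
between the paths. -/
def HasTPyramid (G : SimpleGraph V) (t : ℕ) : Prop :=
  ∃ (a b1 b2 b3 : V) (p1 : G.Walk a b1) (p2 : G.Walk a b2) (p3 : G.Walk a b3),
    p1.IsPath ∧ p2.IsPath ∧ p3.IsPath ∧
    t ≤ p1.length ∧ t ≤ p2.length ∧ t ≤ p3.length ∧
    ((t + 1 ≤ p1.length ∧ t + 1 ≤ p2.length) ∨
     (t + 1 ≤ p1.length ∧ t + 1 ≤ p3.length) ∨
     (t + 1 ≤ p2.length ∧ t + 1 ≤ p3.length)) ∧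
    (∀ x, x ∈ p1.support → x ∈ p2.support → x = a) ∧
    (∀ x, x ∈ p1.support → x ∈ p3.support → x = a) ∧
    (∀ x, x ∈ p2.support → x ∈ p3.support → x = a) ∧
    G.Adj b1 b2 ∧ G.Adj b2 b3 ∧ G.Adj b1 b3 ∧
    (∀ x y, (x ∈ p1.support ∨ x ∈ p2.support ∨ x ∈ p3.support) →
      (y ∈ p1.support ∨ y ∈ p2.support ∨ y ∈ p3.support) → G.Adj x y →
      s(x, y) ∈ p1.edges ∨ s(x, y) ∈ p2.edges ∨ s(x, y) ∈ p3.edges ∨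
      s(x, y) ∈ ({s(b1, b2), s(b2, b3), s(b1, b3)} : Set (Sym2 V)))

/-- `G` is an outerstring graph: the intersection graph of a collection of
simple (injective) curves in the closed upper half-plane, each having one
endpoint on the boundary line. -/
def IsOuterstringGraph (G : SimpleGraph V) : Prop :=
  ∃ f : V → unitInterval → ℝ × ℝ,
    (∀ v, Continuous (f v)) ∧
    (∀ v, Function.Injective (f v)) ∧
    (∀ v t, 0 ≤ (f v t).2) ∧
    (∀ v, (f v 0).2 = 0) ∧
    (∀ u v, u ≠ v → (G.Adj u v ↔ ∃ s t, f u s = f v t))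

/-! Cut each of the three paths of a theta, prism or pyramid two steps after its start, at `m i`.
Let `X i` be the union of the curves along the first part of path `i`, continued through the start
clique to a fixed vertex `a`, and let `Y i` be the union along the rest of path `i`, continued
through the end clique to a fixed vertex `b`. As the paths are long and induced, `X i` and `Y j` are
disjoint for `i ≠ j`. But the grounded points of `a` and `b` cut the (projective) boundary line into
two arcs, and those of some `m i` and `m j` lie on the same arc. Then, up to swapping `i` and `j`,
the pairs `{a, m i}` and `{m j, b}` interlace, so by planarity `X i` and `Y j` cross. -/

section HalfPlane

open Complex

lemma continuousOn_arg_im_nonneg : ContinuousOn arg {z : ℂ | 0 ≤ z.im ∧ z ≠ 0} := by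
  rintro z ⟨-, hz⟩
  by_cases hslit : z ∈ slitPlane
  · exact (continuousAt_arg hslit).continuousWithinAt
  · obtain ⟨hre, him0⟩ : z.re ≤ 0 ∧ z.im = 0 := by
      simpa only [mem_slitPlane_iff, not_or, not_lt, not_not] using hslit
    have hre' : z.re < 0 := hre.lt_of_ne fun h => hz (Complex.ext h him0)
    exact (continuousWithinAt_arg_of_re_neg_of_im_zero hre' him0).mono fun w hw => hw.1

lemma im_sub_im_eq_arg_exp_sub_arg_exp {T : Type*} [TopologicalSpace T] [PreconnectedSpace T]
    {L : T → ℂ} (hL : Continuous L) (him : ∀ x, 0 ≤ (exp (L x)).im) (x y : T) :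
    (L x).im - (L y).im = arg (exp (L x)) - arg (exp (L y)) := by
  have harg : Continuous fun x => arg (exp (L x)) :=
    continuousOn_arg_im_nonneg.comp_continuous (by fun_prop) fun x => ⟨him x, exp_ne_zero _⟩
  have hexp (x : T) : exp (((L x).im - arg (exp (L x)) : ℝ) * I) = 1 := by
    have hlog : ((L x).im - arg (exp (L x)) : ℝ) * I = L x - log (exp (L x)) := by
      apply Complex.ext <;> simp [log_re, log_im, norm_exp]
    rw [hlog, exp_sub, exp_log (exp_ne_zero _), div_self (exp_ne_zero _)]
  have hconst := isCoveringMap_exp.const_of_comp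
    (g := fun x => (((L x).im - arg (exp (L x)) : ℝ) * I : ℂ)) (by fun_prop)
    (fun x y => Subtype.ext ((hexp x).trans (hexp y).symm)) x y
  have := congrArg im hconst
  simp only [mul_I_im, ofReal_re] at this
  linarith

lemma im_sub_im_eq_arg_neg_exp_sub_arg_neg_exp {T : Type*} [TopologicalSpace T]
    [PreconnectedSpace T] {L : T → ℂ} (hL : Continuous L) (him : ∀ x, (exp (L x)).im ≤ 0)
    (x y : T) : (L x).im - (L y).im = arg (-exp (L x)) - arg (-exp (L y)) := by
  have hexp (x : T) : exp (L x + Real.pi * I) = -exp (L x) := exp_add_pi_mul_I _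
  have h := im_sub_im_eq_arg_exp_sub_arg_exp (L := fun x => L x + Real.pi * I) (by fun_prop)
    (fun x => by rw [hexp, neg_im]; exact neg_nonneg.2 (him x)) x y
  simpa only [hexp, add_im, add_sub_add_right_eq_sub] using h

lemma arg_ofReal_sub_ofReal_of_lt {x y : ℝ} (h : x < y) : arg ((x : ℂ) - y) = Real.pi := by
  rw [← ofReal_sub, arg_ofReal_of_neg (sub_neg.2 h)]

lemma arg_ofReal_sub_ofReal_of_le {x y : ℝ} (h : y ≤ x) : arg ((x : ℂ) - y) = 0 := by
  rw [← ofReal_sub, arg_ofReal_of_nonneg (sub_nonneg.2 h)]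

/-- If the paths were disjoint, `γ s - δ t` would have a continuous logarithm on the square. Along
each side the difference stays in a closed half-plane, which determines the change of argument,
and the two ways around the square disagree by `2π`. -/
lemma exists_path_eq_of_lt_of_lt_of_lt {x₁ x₂ x₃ x₄ : ℝ} (h₁₂ : x₁ < x₂) (h₂₃ : x₂ < x₃)
    (h₃₄ : x₃ < x₄) (γ : Path (x₁ : ℂ) x₃) (δ : Path (x₂ : ℂ) x₄) (hγ : ∀ s, 0 ≤ (γ s).im)
    (hδ : ∀ t, 0 ≤ (δ t).im) : ∃ s t, γ s = δ t := by
  by_contra! hne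
  let F : C(ℝ × ℝ, ℂ) := ⟨fun p => γ.extend p.1 - δ.extend p.2, by fun_prop⟩
  have hF (p : ℝ × ℝ) : F p ≠ 0 := sub_ne_zero.2 (hne _ _)
  obtain ⟨L, ⟨-, hL⟩, -⟩ := isCoveringMapOn_exp.existsUnique_continuousMap_lifts F
    (a₀ := 0) (exp_log (hF 0)) hF
  have hexp (s t : ℝ) : exp (L (s, t)) = γ.extend s - δ.extend t := congrFun hL (s, t)
  have hγ' (s : ℝ) : 0 ≤ (γ.extend s).im := hγ _
  have hδ' (t : ℝ) : 0 ≤ (δ.extend t).im := hδ _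
  have bottom := im_sub_im_eq_arg_exp_sub_arg_exp (L := fun s : ℝ => L (s, 0)) (by fun_prop)
    (fun s => by simpa [hexp] using hγ' s) 1 0
  have top := im_sub_im_eq_arg_exp_sub_arg_exp (L := fun s : ℝ => L (s, 1)) (by fun_prop)
    (fun s => by simpa [hexp] using hγ' s) 1 0
  have left := im_sub_im_eq_arg_neg_exp_sub_arg_neg_exp (L := fun t : ℝ => L (0, t))
    (by fun_prop) (fun t => by simpa [hexp] using hδ' t) 1 0
  have right := im_sub_im_eq_arg_neg_exp_sub_arg_neg_exp (L := fun t : ℝ => L (1, t))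
    (by fun_prop) (fun t => by simpa [hexp] using hδ' t) 1 0
  simp only [hexp, Path.extend_zero, Path.extend_one, neg_sub] at bottom top left right
  rw [arg_ofReal_sub_ofReal_of_le h₂₃.le, arg_ofReal_sub_ofReal_of_lt h₁₂] at bottom
  rw [arg_ofReal_sub_ofReal_of_lt h₃₄, arg_ofReal_sub_ofReal_of_lt (by linarith)] at top
  rw [arg_ofReal_sub_ofReal_of_le (by linarith), arg_ofReal_sub_ofReal_of_le h₁₂.le] at left
  rw [arg_ofReal_sub_ofReal_of_le h₃₄.le, arg_ofReal_sub_ofReal_of_lt h₂₃] at right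
  linarith [Real.pi_pos]

end HalfPlane

section Interlaced

variable {R : Type*} [CommRing R] [LinearOrder R] [IsStrictOrderedRing R] {a b c d : R}

/-- The pairs `{a, b}` and `{c, d}` interlace: exactly one of `c` and `d` lies strictly between
`a` and `b`, and neither is equal to `a` or `b`. It is expressed through signs, so that statements
about several pairs reduce to multiplying the differences. -/
def Interlaced (a b c d : R) : Prop :=
  (c - a) * (c - b) * ((d - a) * (d - b)) < 0

lemma Interlaced.min_lt_min_or_min_lt_min (h : Interlaced a b c d) :
    (min a b < min c d ∧ min c d < max a b ∧ max a b < max c d) ∨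
      (min c d < min a b ∧ min a b < max c d ∧ max c d < max a b) := by
  simp only [Interlaced, mul_neg_iff, mul_pos_iff, sub_pos, sub_neg] at h
  rcases le_total a b with hab | hab <;> rcases le_total c d with hcd | hcd <;>
    simp only [hab, hcd, min_eq_left, min_eq_right, max_eq_left, max_eq_right] <;> grind

lemma interlaced_or_interlaced_or_interlaced (hab : a ≠ b) (hac : a ≠ c) (had : a ≠ d)
    (hbc : b ≠ c) (hbd : b ≠ d) (hcd : c ≠ d) :
    Interlaced a b c d ∨ Interlaced a c b d ∨ Interlaced a d b c := by
  by_contra! h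
  simp only [Interlaced, not_lt] at h
  obtain ⟨h₁, h₂, h₃⟩ := h
  have hprod := mul_nonneg (mul_nonneg h₁ h₂) h₃
  have hsq : 0 < ((a - b) * (a - c) * (a - d) * (b - c) * (b - d) * (c - d)) ^ 2 := by
    have := sub_ne_zero.2 hab
    have := sub_ne_zero.2 hac
    have := sub_ne_zero.2 had
    have := sub_ne_zero.2 hbc
    have := sub_ne_zero.2 hbd
    have := sub_ne_zero.2 hcd
    positivity
  linarith

lemma not_pairwise_interlaced (m : Fin 3 → R) :
    ¬ Pairwise fun i j => Interlaced a b (m i) (m j) := by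
  intro h
  let f (i : Fin 3) : R := (m i - a) * (m i - b)
  have h01 : f 0 * f 1 < 0 := h (by decide)
  have h02 : f 0 * f 2 < 0 := h (by decide)
  have h12 : f 1 * f 2 < 0 := h (by decide)
  nlinarith [mul_pos_of_neg_of_neg h01 h02, sq_nonneg (f 0)]

end Interlaced

section GroundedSets

variable {X Y : Set ℂ}

lemma inter_nonempty_of_lt_of_lt_of_lt (hX : IsPathConnected X) (hY : IsPathConnected Y)
    (hXim : ∀ z ∈ X, 0 ≤ z.im) (hYim : ∀ z ∈ Y, 0 ≤ z.im) {x₁ x₂ x₃ x₄ : ℝ} (h₁₂ : x₁ < x₂)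
    (h₂₃ : x₂ < x₃) (h₃₄ : x₃ < x₄) (h₁ : (x₁ : ℂ) ∈ X) (h₂ : (x₂ : ℂ) ∈ Y) (h₃ : (x₃ : ℂ) ∈ X)
    (h₄ : (x₄ : ℂ) ∈ Y) : (X ∩ Y).Nonempty := by
  obtain ⟨γ, hγ⟩ := hX.joinedIn _ h₁ _ h₃
  obtain ⟨δ, hδ⟩ := hY.joinedIn _ h₂ _ h₄
  obtain ⟨s, t, hst⟩ := exists_path_eq_of_lt_of_lt_of_lt h₁₂ h₂₃ h₃₄ γ δ
    (fun s => hXim _ (hγ s)) (fun t => hYim _ (hδ t))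
  exact ⟨γ s, hγ s, hst ▸ hδ t⟩

lemma Interlaced.inter_nonempty (hX : IsPathConnected X) (hY : IsPathConnected Y)
    (hXim : ∀ z ∈ X, 0 ≤ z.im) (hYim : ∀ z ∈ Y, 0 ≤ z.im) {a b c d : ℝ} (h : Interlaced a b c d)
    (ha : (a : ℂ) ∈ X) (hb : (b : ℂ) ∈ X) (hc : (c : ℂ) ∈ Y) (hd : (d : ℂ) ∈ Y) :
    (X ∩ Y).Nonempty := by
  have hmin {x y : ℝ} {S : Set ℂ} (hx : (x : ℂ) ∈ S) (hy : (y : ℂ) ∈ S) :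
      ((min x y : ℝ) : ℂ) ∈ S :=
    min_rec' (fun t : ℝ => (t : ℂ) ∈ S) hx hy
  have hmax {x y : ℝ} {S : Set ℂ} (hx : (x : ℂ) ∈ S) (hy : (y : ℂ) ∈ S) :
      ((max x y : ℝ) : ℂ) ∈ S :=
    max_rec' (fun t : ℝ => (t : ℂ) ∈ S) hx hy
  rcases h.min_lt_min_or_min_lt_min with ⟨h₁, h₂, h₃⟩ | ⟨h₁, h₂, h₃⟩
  · exact inter_nonempty_of_lt_of_lt_of_lt hX hY hXim hYim h₁ h₂ h₃ (hmin ha hb) (hmin hc hd)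
      (hmax ha hb) (hmax hc hd)
  · exact Set.inter_comm Y X ▸ inter_nonempty_of_lt_of_lt_of_lt hY hX hYim hXim h₁ h₂ h₃
      (hmin hc hd) (hmin ha hb) (hmax hc hd) (hmax ha hb)

lemma exists_ne_inter_nonempty {X Y : Fin 3 → Set ℂ} (hX : ∀ i, IsPathConnected (X i))
    (hY : ∀ i, IsPathConnected (Y i)) (hXim : ∀ i, ∀ z ∈ X i, 0 ≤ z.im)
    (hYim : ∀ i, ∀ z ∈ Y i, 0 ≤ z.im) {a b : ℝ} {m : Fin 3 → ℝ} (haX : ∀ i, (a : ℂ) ∈ X i)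
    (hmX : ∀ i, (m i : ℂ) ∈ X i) (hmY : ∀ i, (m i : ℂ) ∈ Y i) (hbY : ∀ i, (b : ℂ) ∈ Y i) :
    ∃ i j, i ≠ j ∧ (X i ∩ Y j).Nonempty := by
  by_contra! hdisj
  have hne {i j : Fin 3} (hij : i ≠ j) {x y : ℝ} (hx : (x : ℂ) ∈ X i) (hy : (y : ℂ) ∈ Y j) :
      x ≠ y := by
    rintro rfl
    exact (hdisj i j hij).subset ⟨hx, hy⟩
  have hnot {i j : Fin 3} (hij : i ≠ j) : ¬ Interlaced a (m i) (m j) b := fun h =>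
    (h.inter_nonempty (hX i) (hY j) (hXim i) (hYim j) (haX i) (hmX i) (hmY j) (hbY j)).ne_empty
      (hdisj i j hij)
  refine not_pairwise_interlaced (a := a) (b := b) m fun i j hij => ?_
  have hab : a ≠ b := hne hij (haX i) (hbY j)
  have hai : a ≠ m i := hne hij.symm (haX j) (hmY i)
  have haj : a ≠ m j := hne hij (haX i) (hmY j)
  have hij' : m i ≠ m j := hne hij (hmX i) (hmY j)
  have hib : m i ≠ b := hne hij (hmX i) (hbY j)
  have hjb : m j ≠ b := hne hij.symm (hmX j) (hbY i)
  rcases interlaced_or_interlaced_or_interlaced hai haj hab hij' hib hjb with h | h | h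
  · exact absurd h (hnot hij)
  · exact absurd h (hnot hij.symm)
  · exact h

end GroundedSets

section GroundedIntersectionGraph

variable {G : SimpleGraph V}

/-- `G` is the intersection graph of path-connected sets in the closed upper half-plane, each of
which meets the boundary line. This extends outerstring graphs by allowing arbitrary path-connected
sets in place of simple curves. -/
def IsGroundedIntersectionGraph (G : SimpleGraph V) : Prop :=
  ∃ S : V → Set ℂ, (∀ v, IsPathConnected (S v)) ∧ (∀ v, ∀ z ∈ S v, 0 ≤ z.im) ∧
    (∀ v, ∃ x : ℝ, (x : ℂ) ∈ S v) ∧ ∀ u v, u ≠ v → (G.Adj u v ↔ (S u ∩ S v).Nonempty)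

lemma IsOuterstringGraph.isGroundedIntersectionGraph (hG : IsOuterstringGraph G) :
    IsGroundedIntersectionGraph G := by
  obtain ⟨f, hcont, -, him, hbase, hadj⟩ := hG
  let e := Complex.equivRealProdCLM.symm
  refine ⟨fun v => Set.range (e ∘ f v), fun v => ?_, ?_, fun v => ⟨(f v 0).1, 0, ?_⟩,
    fun u v huv => ?_⟩
  · have : PathConnectedSpace unitInterval := isPathConnected_iff_pathConnectedSpace.1
      ((convex_Icc (0 : ℝ) 1).isPathConnected ⟨0, unitInterval.zero_mem⟩)
    exact isPathConnected_range (e.continuous.comp (hcont v))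
  · rintro v _ ⟨t, rfl⟩
    simpa [e] using him v t
  · apply Complex.ext <;> simp [e, hbase]
  · rw [hadj u v huv, Set.inter_nonempty_iff_exists_left]
    simp [eq_comm]

lemma isPathConnected_biUnion_support {T : Type*} [TopologicalSpace T] {S : V → Set T}
    (hS : ∀ v, IsPathConnected (S v)) (hadj : ∀ u v, G.Adj u v → (S u ∩ S v).Nonempty) {u v : V}
    (p : G.Walk u v) : IsPathConnected (⋃ x ∈ p.support, S x) := by
  induction p with
  | nil => simpa using hS _
  | @cons u v w huv p ih =>
    have hunion : ⋃ x ∈ (Walk.cons huv p).support, S x = S u ∪ ⋃ x ∈ p.support, S x := by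
      simp [Set.iUnion_or, Set.iUnion_union_distrib]
    rw [hunion]
    exact (hS u).union ih ((hadj u v huv).mono
      (Set.inter_subset_inter_right _ (Set.subset_biUnion_of_mem p.start_mem_support)))

theorem IsGroundedIntersectionGraph.exists_ne_eq_or_adj (hG : IsGroundedIntersectionGraph G)
    {a b : V} {m : Fin 3 → V} (P : ∀ i, G.Walk a (m i)) (Q : ∀ i, G.Walk (m i) b) :
    ∃ i j, i ≠ j ∧ ∃ x ∈ (P i).support, ∃ y ∈ (Q j).support, x = y ∨ G.Adj x y := by
  obtain ⟨S, hS, him, hbase, hadj⟩ := hG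
  choose g hg using hbase
  have hmeet (u v : V) (huv : G.Adj u v) : (S u ∩ S v).Nonempty := (hadj u v huv.ne).1 huv
  have hunion {u v : V} (p : G.Walk u v) : ∀ z ∈ ⋃ x ∈ p.support, S x, 0 ≤ z.im := by
    simp only [Set.mem_iUnion]
    rintro z ⟨x, -, hz⟩
    exact him x z hz
  have hmem {u v w : V} (p : G.Walk u v) (hw : w ∈ p.support) :
      (g w : ℂ) ∈ ⋃ x ∈ p.support, S x :=
    Set.mem_biUnion hw (hg w)
  obtain ⟨i, j, hij, z, hzP, hzQ⟩ := exists_ne_inter_nonempty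
    (fun i => isPathConnected_biUnion_support hS hmeet (P i))
    (fun i => isPathConnected_biUnion_support hS hmeet (Q i))
    (fun i => hunion (P i)) (fun i => hunion (Q i))
    (fun i => hmem (P i) (P i).start_mem_support) (fun i => hmem (P i) (P i).end_mem_support)
    (fun i => hmem (Q i) (Q i).start_mem_support) (fun i => hmem (Q i) (Q i).end_mem_support)
  simp only [Set.mem_iUnion] at hzP hzQ
  obtain ⟨x, hx, hzx⟩ := hzP
  obtain ⟨y, hy, hzy⟩ := hzQ
  refine ⟨i, j, hij, x, hx, y, hy, or_iff_not_imp_left.2 fun hxy => ?_⟩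
  exact (hadj x y hxy).2 ⟨z, hzx, hzy⟩

end GroundedIntersectionGraph

section ThreePathConfiguration

variable {G : SimpleGraph V} {a b : Fin 3 → V} {p : ∀ i, G.Walk (a i) (b i)}

/-- A three-path configuration, the common generalisation of thetas, prisms and pyramids: three
paths such that the starting vertices, and likewise the final vertices, are pairwise equal or
adjacent, and such that there are no further coincidences or adjacencies between the paths. -/
structure IsThreePathConfiguration (p : ∀ i, G.Walk (a i) (b i)) : Prop where
  isPath : ∀ i, (p i).IsPath
  start_eq_or_adj : Pairwise fun i j => a i = a j ∨ G.Adj (a i) (a j)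
  end_eq_or_adj : Pairwise fun i j => b i = b j ∨ G.Adj (b i) (b j)
  eq_ends : Pairwise fun i j => ∀ x, x ∈ (p i).support → x ∈ (p j).support →
    (x = a i ∧ x = a j) ∨ (x = b i ∧ x = b j)
  adj : ∀ x y, (∃ i, x ∈ (p i).support) → (∃ i, y ∈ (p i).support) → G.Adj x y →
    (∃ i, s(x, y) ∈ (p i).edges) ∨ (x ∈ Set.range a ∧ y ∈ Set.range a) ∨
      (x ∈ Set.range b ∧ y ∈ Set.range b)

namespace IsThreePathConfiguration

variable {i j : Fin 3} {k l : ℕ}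

lemma index_of_getVert_eq (hp : IsThreePathConfiguration p) (hk : k ≤ (p i).length)
    (hl : l ≤ (p j).length) (h : (p i).getVert k = (p j).getVert l) :
    (i = j ∧ k = l) ∨ (k = 0 ∧ l = 0) ∨ (k = (p i).length ∧ l = (p j).length) := by
  by_cases hij : i = j
  · subst hij
    exact Or.inl ⟨rfl, (hp.isPath i).getVert_injOn hk hl h⟩
  · have hends := hp.eq_ends hij _ ((p i).getVert_mem_support k)
      (h ▸ (p j).getVert_mem_support l)
    rw [h, (hp.isPath j).getVert_eq_start_iff hl, (hp.isPath j).getVert_eq_end_iff hl, ← h,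
      (hp.isPath i).getVert_eq_start_iff hk, (hp.isPath i).getVert_eq_end_iff hk] at hends
    exact Or.inr hends

/-- The second and third alternatives also cover the first and last edge of a path
whose end is shared with other paths, as in a theta; hence `k ≤ 1` rather than `k = 0`. -/
lemma index_of_adj_getVert (hp : IsThreePathConfiguration p) (hlen : ∀ i, 2 ≤ (p i).length)
    (hk : k ≤ (p i).length) (hl : l ≤ (p j).length)
    (h : G.Adj ((p i).getVert k) ((p j).getVert l)) :
    (i = j ∧ (l = k + 1 ∨ k = l + 1)) ∨ (k ≤ 1 ∧ l ≤ 1) ∨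
      ((p i).length ≤ k + 1 ∧ (p j).length ≤ l + 1) := by
  rcases hp.adj _ _ ⟨i, (p i).getVert_mem_support k⟩ ⟨j, (p j).getVert_mem_support l⟩ h with
    ⟨e, he⟩ | ⟨⟨c, hc⟩, ⟨d, hd⟩⟩ | ⟨⟨c, hc⟩, ⟨d, hd⟩⟩
  · obtain ⟨n, hn, hs⟩ := (Walk.mk_mem_edges_iff_exists _).1 he
    rcases Sym2.eq_iff.1 hs with ⟨h₁, h₂⟩ | ⟨h₁, h₂⟩
    · have := hlen e
      have := hp.index_of_getVert_eq (by omega) hk h₁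
      have := hp.index_of_getVert_eq (by omega) hl h₂
      grind
    · have := hlen e
      have := hp.index_of_getVert_eq (by omega) hl h₁
      have := hp.index_of_getVert_eq (by omega) hk h₂
      grind
  · rw [← (p c).getVert_zero] at hc
    rw [← (p d).getVert_zero] at hd
    have := hlen c
    have := hlen d
    have := hp.index_of_getVert_eq (by omega) hk hc
    have := hp.index_of_getVert_eq (by omega) hl hd
    grind
  · rw [← (p c).getVert_length] at hc
    rw [← (p d).getVert_length] at hd
    have := hlen c
    have := hlen d
    have := hp.index_of_getVert_eq (by omega) hk hc
    have := hp.index_of_getVert_eq (by omega) hl hd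
    grind

lemma getVert_ne_and_not_adj (hp : IsThreePathConfiguration p) (hlen : ∀ i, 4 ≤ (p i).length)
    (hij : i ≠ j) {c d : Fin 3} (hk : k ≤ 2) (hc : c = i ∨ k = 0) (hl : 2 ≤ l)
    (hl' : l ≤ (p d).length) (hd : d = j ∨ l = (p d).length) :
    (p c).getVert k ≠ (p d).getVert l ∧ ¬ G.Adj ((p c).getVert k) ((p d).getVert l) := by
  have hkc : k + 2 ≤ (p c).length := by have := hlen c; omega
  refine ⟨fun h => ?_, fun h => ?_⟩
  · have := hp.index_of_getVert_eq (by omega) hl' h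
    grind
  · have := hp.index_of_adj_getVert (fun i => (by omega : 2 ≤ 4).trans (hlen i)) (by omega) hl' h
    grind

end IsThreePathConfiguration

lemma exists_walk_support_subset_pair {u v : V} (h : u = v ∨ G.Adj u v) :
    ∃ q : G.Walk u v, ∀ x ∈ q.support, x = u ∨ x = v := by
  rcases h with rfl | h
  · exact ⟨.nil, by simp⟩
  · exact ⟨h.toWalk, by simp⟩

theorem IsThreePathConfiguration.exists_length_lt_four (hp : IsThreePathConfiguration p)
    (hG : IsGroundedIntersectionGraph G) : ∃ i, (p i).length < 4 := by
  by_contra! hlen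
  have hstart (i : Fin 3) : a 0 = a i ∨ G.Adj (a 0) (a i) := by
    by_cases hi : 0 = i
    · exact .inl (congrArg a hi)
    · exact hp.start_eq_or_adj hi
  have hend (i : Fin 3) : b i = b 0 ∨ G.Adj (b i) (b 0) := by
    by_cases hi : i = 0
    · exact .inl (congrArg b hi)
    · exact hp.end_eq_or_adj hi
  choose q hq using fun i => exists_walk_support_subset_pair (hstart i)
  choose r hr using fun i => exists_walk_support_subset_pair (hend i)
  obtain ⟨i, j, hij, x, hx, y, hy, hxy⟩ := hG.exists_ne_eq_or_adj
    (fun i => (q i).append ((p i).take 2)) (fun i => ((p i).drop 2).append (r i))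
  obtain ⟨c, k, hk, hc, rfl⟩ : ∃ c k, k ≤ 2 ∧ (c = i ∨ k = 0) ∧ (p c).getVert k = x := by
    rcases (Walk.mem_support_append_iff _ _).1 hx with hx | hx
    · rcases hq i x hx with rfl | rfl
      · exact ⟨0, 0, by simp, .inr rfl, (p 0).getVert_zero⟩
      · exact ⟨i, 0, by simp, .inr rfl, (p i).getVert_zero⟩
    · obtain ⟨k, hk, -⟩ := Walk.mem_support_iff_exists_getVert.1 hx
      exact ⟨i, 2 ⊓ k, inf_le_left, .inl rfl, by rw [← hk, Walk.take_getVert]⟩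
  obtain ⟨d, l, hl, hl', hd, rfl⟩ : ∃ d l, 2 ≤ l ∧ l ≤ (p d).length ∧
      (d = j ∨ l = (p d).length) ∧ (p d).getVert l = y := by
    have hlen₂ (i : Fin 3) : 2 ≤ (p i).length := by have := hlen i; omega
    rcases (Walk.mem_support_append_iff _ _).1 hy with hy | hy
    · obtain ⟨l, hl, hl'⟩ := Walk.mem_support_iff_exists_getVert.1 hy
      rw [Walk.drop_length] at hl'
      have := hlen₂ j
      exact ⟨j, 2 + l, by omega, by omega, .inl rfl, by rw [← hl, Walk.drop_getVert]⟩
    · rcases hr j y hy with rfl | rfl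
      · exact ⟨j, _, hlen₂ j, le_rfl, .inr rfl, (p j).getVert_length⟩
      · exact ⟨0, _, hlen₂ 0, le_rfl, .inr rfl, (p 0).getVert_length⟩
  obtain ⟨hne, hnadj⟩ := hp.getVert_ne_and_not_adj hlen hij hk hc hl hl' hd
  exact hxy.elim hne hnadj

lemma pairwise_fin_three {R : Fin 3 → Fin 3 → Prop} (hR : ∀ i j, R i j → R j i) (h01 : R 0 1)
    (h02 : R 0 2) (h12 : R 1 2) : Pairwise R := by
  intro i j hij
  fin_cases i <;> fin_cases j <;>
    first | exact absurd rfl hij | assumption | exact hR _ _ ‹_›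

lemma HasTTheta.exists_isThreePathConfiguration {t : ℕ} (h : HasTTheta G t) :
    ∃ (a b : Fin 3 → V) (p : ∀ i, G.Walk (a i) (b i)),
      IsThreePathConfiguration p ∧ ∀ i, t + 1 ≤ (p i).length := by
  obtain ⟨a, b, p₁, p₂, p₃, h₁, h₂, h₃, l₁, l₂, l₃, h₁₂, h₁₃, h₂₃, hadj⟩ := h
  refine ⟨fun _ => a, fun _ => b, fun i => match i with | 0 => p₁ | 1 => p₂ | 2 => p₃,
    ⟨?_, fun _ _ _ => .inl rfl, fun _ _ _ => .inl rfl, ?_, ?_⟩, ?_⟩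
  · simp [Fin.forall_fin_succ, h₁, h₂, h₃]
  · refine pairwise_fin_three (fun i j h x hj hi => (h x hi hj).imp And.symm And.symm) ?_ ?_ ?_ <;>
      simpa only [and_self]
  · refine fun x y hx hy hxy => .inl ?_
    simpa [Fin.exists_fin_succ] using hadj x y (by simpa [Fin.exists_fin_succ] using hx)
      (by simpa [Fin.exists_fin_succ] using hy) hxy
  · simpa [Fin.forall_fin_succ] using ⟨l₁, l₂, l₃⟩

lemma HasTTheta.mono {s t : ℕ} (hst : s ≤ t) (h : HasTTheta G t) : HasTTheta G s := by
  obtain ⟨a, b, p₁, p₂, p₃, h₁, h₂, h₃, l₁, l₂, l₃, h⟩ := h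
  exact ⟨a, b, p₁, p₂, p₃, h₁, h₂, h₃, by omega, by omega, by omega, h⟩

lemma mem_range_of_mk_mem_triangle {x y u v w : V}
    (h : s(x, y) ∈ ({s(u, v), s(v, w), s(u, w)} : Set (Sym2 V))) :
    x ∈ Set.range ![u, v, w] ∧ y ∈ Set.range ![u, v, w] := by
  simp only [Set.mem_insert_iff, Set.mem_singleton_iff, Sym2.eq_iff] at h
  rcases h with (⟨rfl, rfl⟩ | ⟨rfl, rfl⟩) | (⟨rfl, rfl⟩ | ⟨rfl, rfl⟩) |
    (⟨rfl, rfl⟩ | ⟨rfl, rfl⟩) <;> simp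

lemma HasTPrism.exists_isThreePathConfiguration {t : ℕ} (h : HasTPrism G t) :
    ∃ (a b : Fin 3 → V) (p : ∀ i, G.Walk (a i) (b i)),
      IsThreePathConfiguration p ∧ ∀ i, t ≤ (p i).length := by
  obtain ⟨a₁, a₂, a₃, b₁, b₂, b₃, p₁, p₂, p₃, h₁, h₂, h₃, l₁, l₂, l₃, h₁₂, h₁₃, h₂₃,
    ha₁₂, ha₂₃, ha₁₃, hb₁₂, hb₂₃, hb₁₃, hadj⟩ := h
  refine ⟨![a₁, a₂, a₃], ![b₁, b₂, b₃], fun i => match i with | 0 => p₁ | 1 => p₂ | 2 => p₃,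
    ⟨?_, ?_, ?_, ?_, ?_⟩, ?_⟩
  · simp [Fin.forall_fin_succ, h₁, h₂, h₃]
  · exact pairwise_fin_three (fun i j h => h.imp .symm .symm) (.inr ha₁₂) (.inr ha₁₃) (.inr ha₂₃)
  · exact pairwise_fin_three (fun i j h => h.imp .symm .symm) (.inr hb₁₂) (.inr hb₁₃) (.inr hb₂₃)
  · exact pairwise_fin_three (fun i j h x hj hi => (h x hi hj).imp And.symm And.symm)
      (fun x hx hy => (h₁₂ x hx hy).elim) (fun x hx hy => (h₁₃ x hx hy).elim)
      (fun x hx hy => (h₂₃ x hx hy).elim)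
  · intro x y hx hy hxy
    rcases hadj x y (by simpa [Fin.exists_fin_succ] using hx)
      (by simpa [Fin.exists_fin_succ] using hy) hxy with h | h | h | h
    · exact .inl ⟨0, h⟩
    · exact .inl ⟨1, h⟩
    · exact .inl ⟨2, h⟩
    · obtain h | h : s(x, y) ∈ ({s(a₁, a₂), s(a₂, a₃), s(a₁, a₃)} : Set (Sym2 V)) ∨
          s(x, y) ∈ ({s(b₁, b₂), s(b₂, b₃), s(b₁, b₃)} : Set (Sym2 V)) := by
        simpa only [Set.mem_insert_iff, Set.mem_singleton_iff, or_assoc] using h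
      · exact .inr (.inl (mem_range_of_mk_mem_triangle h))
      · exact .inr (.inr (mem_range_of_mk_mem_triangle h))
  · simp [Fin.forall_fin_succ, l₁, l₂, l₃]

lemma HasTPyramid.exists_isThreePathConfiguration {t : ℕ} (h : HasTPyramid G t) :
    ∃ (a b : Fin 3 → V) (p : ∀ i, G.Walk (a i) (b i)),
      IsThreePathConfiguration p ∧ ∀ i, t ≤ (p i).length := by
  obtain ⟨a, b₁, b₂, b₃, p₁, p₂, p₃, h₁, h₂, h₃, l₁, l₂, l₃, -, h₁₂, h₁₃, h₂₃,
    hb₁₂, hb₂₃, hb₁₃, hadj⟩ := h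
  refine ⟨fun _ => a, ![b₁, b₂, b₃], fun i => match i with | 0 => p₁ | 1 => p₂ | 2 => p₃,
    ⟨?_, fun _ _ _ => .inl rfl, ?_, ?_, ?_⟩, ?_⟩
  · simp [Fin.forall_fin_succ, h₁, h₂, h₃]
  · exact pairwise_fin_three (fun i j h => h.imp .symm .symm) (.inr hb₁₂) (.inr hb₁₃) (.inr hb₂₃)
  · exact pairwise_fin_three (fun i j h x hj hi => (h x hi hj).imp And.symm And.symm)
      (fun x hx hy => .inl ⟨h₁₂ x hx hy, h₁₂ x hx hy⟩)
      (fun x hx hy => .inl ⟨h₁₃ x hx hy, h₁₃ x hx hy⟩)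
      (fun x hx hy => .inl ⟨h₂₃ x hx hy, h₂₃ x hx hy⟩)
  · intro x y hx hy hxy
    rcases hadj x y (by simpa [Fin.exists_fin_succ] using hx)
      (by simpa [Fin.exists_fin_succ] using hy) hxy with h | h | h | h
    · exact .inl ⟨0, h⟩
    · exact .inl ⟨1, h⟩
    · exact .inl ⟨2, h⟩
    · exact .inr (.inr (mem_range_of_mk_mem_triangle h))
  · simp [Fin.forall_fin_succ, l₁, l₂, l₃]

end ThreePathConfiguration

theorem statement10_general (G : SimpleGraph V) (hG : IsGroundedIntersectionGraph G) :
    ¬ HasTTheta G 3 ∧ ¬ HasTPrism G 4 ∧ ¬ HasTPyramid G 4 := by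
  refine ⟨fun h => ?_, fun h => ?_, fun h => ?_⟩ <;>
    obtain ⟨_, _, p, hp, hlen⟩ := h.exists_isThreePathConfiguration <;>
    obtain ⟨i, hi⟩ := hp.exists_length_lt_four hG <;>
    exact (hlen i).not_gt hi

/-- Every outerstring graph is
(`4`-theta, `4`-prism, `4`-pyramid)-free. -/
theorem statement10 (G : SimpleGraph V) (h : IsOuterstringGraph G) :
    ¬ HasTTheta G 4 ∧ ¬ HasTPrism G 4 ∧ ¬ HasTPyramid G 4 := by
  obtain ⟨hTheta, hPrism, hPyramid⟩ := statement10_general G h.isGroundedIntersectionGraph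
  exact ⟨fun hTheta₄ => hTheta (hTheta₄.mono (by norm_num)), hPrism, hPyramid⟩
end

section
/- Let G be a connected graph, r a vertex, x and y two vertices lying on a common isometric path P of G with x between the endpoints, such that the subpath Q of P from y to x satisfies |A_r(Q)| ≥ 2δ+2, where A_r denotes a maximum antichain w.r.t. r. If additionally d(y,x) ≤ |d(r,y) − d(r,x)| + 2δ for some δ ≥ 0, then a contradiction arises with the bound d(y,x) ≥ |d(r,y) − d(r,x)| + |A_r(Q)| − 1. Concretely: for any isometric path Q from y to x and vertex r, if |A_r(Q)| ≥ 2δ + 2 then d(y,x) ≥ |d(r,y) − d(r,x)| + 2δ + 1. -/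
open SimpleGraph

variable {V : Type*}

/-!
Following a walk `p` for `i` steps and then going straight to `r` takes `i + d(r, pᵢ)` steps. This
quantity never decreases along `p`, and it stays constant exactly along runs of steps of the BFS
DAG `G_r`. Vertices of an antichain therefore give distinct values of it, all lying between
`d(r, y)` and `|Q| + d(r, x)`. The same count for the reversed walk bounds the other sign of
`d(r, y) - d(r, x)`.
-/

section DetourLength

variable {G : SimpleGraph V} {u v : V}

/-- The length of the route that follows `p` for `i` steps and then takes a shortest path to `r`.
It is meant for `i ≤ p.length`: beyond that, `p.getVert i` stays at the endpoint of `p`. -/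
noncomputable def detourLength (r : V) (p : G.Walk u v) (i : ℕ) : ℕ :=
  i + G.dist r (p.getVert i)

lemma detourLength_zero (r : V) (p : G.Walk u v) : detourLength r p 0 = G.dist r u := by
  simp [detourLength]

lemma detourLength_length (r : V) (p : G.Walk u v) :
    detourLength r p p.length = p.length + G.dist r v := by
  simp [detourLength]

lemma detourLength_monotone (r : V) (p : G.Walk u v) : Monotone (detourLength r p) := by
  refine monotone_nat_of_le_succ fun i ↦ ?_
  unfold detourLength
  rcases lt_or_ge i p.length with hi | hi
  · have := (p.adj_getVert_succ hi).diff_dist_adj (u := r)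
    omega
  · rw [p.getVert_of_length_le hi, p.getVert_of_length_le (Nat.le_succ_of_le hi)]
    omega

lemma dagStep_of_detourLength_eq_succ {r : V} {p : G.Walk u v} {i : ℕ}
    (h : detourLength r p i = detourLength r p (i + 1)) :
    dagStep G r (p.getVert i) (p.getVert (i + 1)) := by
  unfold detourLength at h
  have hi : i < p.length := by
    by_contra! hi
    rw [p.getVert_of_length_le hi, p.getVert_of_length_le (Nat.le_succ_of_le hi)] at h
    omega
  exact ⟨p.adj_getVert_succ hi, by omega⟩

lemma dagReach_of_detourLength_eq {r : V} {p : G.Walk u v} {i j : ℕ} (hij : i ≤ j)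
    (h : detourLength r p i = detourLength r p j) :
    dagReach G r (p.getVert i) (p.getVert j) := by
  induction j, hij using Nat.le_induction with
  | base => exact .refl
  | succ j hij ih =>
    have hle : detourLength r p i ≤ detourLength r p j := detourLength_monotone r p hij
    have hle_succ : detourLength r p j ≤ detourLength r p (j + 1) :=
      detourLength_monotone r p j.le_succ
    exact (ih (by omega)).tail (dagStep_of_detourLength_eq_succ (by omega))

end DetourLength

lemma IsAntichainSet.eq_of_dagReach {G : SimpleGraph V} {r a b : V} {A : Finset V}
    (hA : IsAntichainSet G r A) (ha : a ∈ A) (hb : b ∈ A) (h : dagReach G r a b) : a = b :=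
  by_contra fun hne ↦ (hA a ha b hb hne).1 h

lemma IsAntichainSet.card_add_dist_le {G : SimpleGraph V} {r u v : V} {A : Finset V}
    (hanti : IsAntichainSet G r A) (p : G.Walk u v) (hA : ∀ a ∈ A, a ∈ p.support) :
    A.card + G.dist r u ≤ p.length + G.dist r v + 1 := by
  have hindex (a) (ha : a ∈ A) : ∃ i, p.getVert i = a ∧ i ≤ p.length :=
    Walk.mem_support_iff_exists_getVert.mp (hA a ha)
  choose! index getVert_index index_le using hindex
  have hmaps : ∀ a ∈ A, detourLength r p (index a) ∈
      Finset.Icc (detourLength r p 0) (detourLength r p p.length) := fun a ha ↦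
    Finset.mem_Icc.mpr ⟨detourLength_monotone r p (Nat.zero_le _),
      detourLength_monotone r p (index_le a ha)⟩
  have hinj : Set.InjOn (fun a ↦ detourLength r p (index a)) A := by
    intro a ha b hb hab
    have dagReach_of_le {a b : V} (ha : a ∈ A) (hb : b ∈ A) (hle : index a ≤ index b)
        (hab : detourLength r p (index a) = detourLength r p (index b)) : dagReach G r a b := by
      simpa only [getVert_index a ha, getVert_index b hb] using dagReach_of_detourLength_eq hle hab
    rcases le_total (index a) (index b) with hle | hle
    · exact hanti.eq_of_dagReach ha hb (dagReach_of_le ha hb hle hab)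
    · exact (hanti.eq_of_dagReach hb ha (dagReach_of_le hb ha hle hab.symm)).symm
  have hcard := Finset.card_le_card_of_injOn _ hmaps hinj
  have hle : detourLength r p 0 ≤ detourLength r p p.length :=
    detourLength_monotone r p (Nat.zero_le _)
  rw [Nat.card_Icc] at hcard
  rw [detourLength_zero, detourLength_length] at hcard hle
  omega

theorem statement13_general (G : SimpleGraph V) (r x y : V) (_hr : G.Reachable r y)
    (Q : G.Walk y x) (A : Finset V) (hA : ∀ a ∈ A, a ∈ Q.support)
    (hanti : IsAntichainSet G r A) :
    ((G.dist r y : ℤ) - (G.dist r x : ℤ)).natAbs + A.card ≤ Q.length + 1 := by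
  have hforward : A.card + G.dist r y ≤ Q.length + G.dist r x + 1 :=
    hanti.card_add_dist_le Q hA
  have hbackward : A.card + G.dist r x ≤ Q.length + G.dist r y + 1 := by
    simpa using hanti.card_add_dist_le Q.reverse (by simpa using hA)
  omega

/-- For any isometric path `Q` from `y` to `x` in a connected graph
and any vertex `r`, if some antichain (w.r.t. `r`) among the vertices of `Q` has
size at least `2δ + 2`, then `d(y,x) ≥ |d(r,y) - d(r,x)| + 2δ + 1`. -/
theorem statement13 (G : SimpleGraph V) (hG : G.Connected) (r x y : V) (δ : ℕ)
    (Q : G.Walk y x) (hQ : IsIsometricPath G Q)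
    (A : Finset V) (hA : ∀ a ∈ A, a ∈ Q.support) (hanti : IsAntichainSet G r A)
    (hcard : 2 * δ + 2 ≤ A.card) :
    ((G.dist r y : ℤ) - (G.dist r x : ℤ)).natAbs + 2 * δ + 1 ≤ G.dist y x := by
  have hbound := statement13_general G r x y (hG r y) Q A hA hanti
  have hlength := hQ.2
  omega
end
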